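/- arXiv:2407.05296 — 4 statements merged into one kernel-verified Lean document; each statement's English description precedes it below -/
import Mathlib

section
/- Let I be an ideal of bounded operators on H that is not contained in the trace class L₁, and let φ be a positive trace on I. If 0 ≤ S, T ∈ I are such that μ(n,S) ~ μ(n,T) as n → ∞ (i.e. μ(n,S) = μ(n,T) + o(μ(n,T))), then φ(S) = φ(T). -/
open MeasureTheory Filter Topology
open scoped ENNReal

noncomputable section

variable {H : Type*} [NormedAddCommGroup H] [InnerProductSpace ℂ H] [CompleteSpace H]

/-- `sv T n`: the `n`-th singular value of a (bounded) operator `T`, i.e. the distance in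
operator norm from `T` to the operators of rank at most `n`. -/
def sv (T : H →L[ℂ] H) (n : ℕ) : ℝ :=
  sInf {r : ℝ | ∃ F : H →L[ℂ] H,
    LinearMap.rank (F : H →ₗ[ℂ] H) ≤ (n : Cardinal) ∧ ‖T - F‖ = r}

/-- `lam` is *the* eigenvalue sequence of `T`: moduli are non-increasing and every nonzero
value `z` occurs exactly as many times as its algebraic multiplicity, i.e. the dimension of
the generalized eigenspace of `T` at `z` (this also forces padding by zeros when `T` has
only finitely many nonzero eigenvalues). -/
def IsEigenvalueSeq (T : H →L[ℂ] H) (lam : ℕ → ℂ) : Prop :=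
  Antitone (fun n => ‖lam n‖) ∧
  ∀ z : ℂ, z ≠ 0 →
    {n : ℕ | lam n = z}.Finite ∧
      Nat.card {n : ℕ | lam n = z} =
        Module.finrank ℂ (Module.End.maxGenEigenspace (↑T : H →ₗ[ℂ] H) z)

namespace PT
set_option linter.unusedSectionVars false
open ContinuousLinearMap

theorem ext_basis {H : Type*} [NormedAddCommGroup H] [InnerProductSpace ℂ H] [CompleteSpace H]
    (e : HilbertBasis ℕ ℂ H) {A B : H →L[ℂ] H} (h : ∀ n, A (e n) = B (e n)) : A = B := by
  refine ContinuousLinearMap.ext_on (s := Set.range e) ?_ ?_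
  · have := e.dense_span
    rw [Submodule.dense_iff_topologicalClosure_eq_top]
    exact this
  · rintro _ ⟨n, rfl⟩; exact h n

theorem exists_isom {H : Type*} [NormedAddCommGroup H] [InnerProductSpace ℂ H] [CompleteSpace H]
    (e : HilbertBasis ℕ ℂ H) {u : ℕ → H} (hu : Orthonormal ℂ u) :
    ∃ U : H →L[ℂ] H, (∀ n, U (e n) = u n) ∧ adjoint U ∘L U = 1 := by
  classical
  let V : H →ₗᵢ[ℂ] H := (hu.orthogonalFamily.linearIsometry).comp e.repr.toLinearIsometry
  refine ⟨V.toContinuousLinearMap, fun n => ?_, ?_⟩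
  · change hu.orthogonalFamily.linearIsometry (e.repr (e n)) = u n
    rw [e.repr_self]
    refine (OrthogonalFamily.linearIsometry_apply_single _ _).trans ?_
    simp
  · exact (norm_map_iff_adjoint_comp_self _).1 (fun x => V.norm_map x)

theorem exists_diag {H : Type*} [NormedAddCommGroup H] [InnerProductSpace ℂ H] [CompleteSpace H]
    (e : HilbertBasis ℕ ℂ H) (d : ℕ → ℝ) (K : ℝ) (hK : 0 ≤ K) (hd : ∀ n, |d n| ≤ K) :
    ∃ D : H →L[ℂ] H, (∀ n, D (e n) = (d n : ℂ) • e n) ∧ ‖D‖ ≤ K ∧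
      ∀ x n, inner ℂ (e n) (D x) = (d n : ℂ) * inner ℂ (e n) x := by
  classical
  let M : (lp (fun _ : ℕ => ℂ) 2) →L[ℂ] (lp (fun _ : ℕ => ℂ) 2) := lp.mapCLM 2 (E := fun _ : ℕ => ℂ) (F := fun _ : ℕ => ℂ)
    (fun n => (d n : ℂ) • ContinuousLinearMap.id ℂ ℂ) hK
    (fun n => by simpa [norm_smul] using hd n)
  have hM : ‖M‖ ≤ K := lp.norm_mapCLM_le ..
  have key : ∀ x n, inner ℂ (e n) (e.repr.symm (M (e.repr x))) = (d n : ℂ) * inner ℂ (e n) x := by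
    intro x n
    rw [← e.repr_apply_apply, ← e.repr_apply_apply]
    simp [M]
  refine ⟨(e.repr.symm : (lp (fun _ : ℕ => ℂ) 2) →L[ℂ] H) ∘L M ∘L (e.repr : H →L[ℂ] (lp (fun _ : ℕ => ℂ) 2)), fun n => ?_, ?_, ?_⟩
  · apply e.repr.injective
    ext m
    rw [e.repr_apply_apply, e.repr_apply_apply]
    change inner ℂ (e m) (e.repr.symm (M (e.repr (e n)))) = _
    rw [key, inner_smul_right, orthonormal_iff_ite.1 e.orthonormal]
    split_ifs with h <;> simp [h]
  · refine opNorm_le_bound _ hK fun x => ?_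
    change ‖e.repr.symm (M (e.repr x))‖ ≤ _
    rw [LinearIsometryEquiv.norm_map]
    simpa using M.le_of_opNorm_le hM (e.repr x)
  · exact key

def BD (d : ℕ → ℝ) : Prop := ∃ K : ℝ, ∀ n, |d n| ≤ K

open Classical in
def dg {H : Type*} [NormedAddCommGroup H] [InnerProductSpace ℂ H] [CompleteSpace H]
    (e : HilbertBasis ℕ ℂ H) (d : ℕ → ℝ) : H →L[ℂ] H :=
  if h : BD d then (exists_diag e d h.choose ((abs_nonneg (d 0)).trans (h.choose_spec 0))
    h.choose_spec).choose else 0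

variable {H : Type*} [NormedAddCommGroup H] [InnerProductSpace ℂ H] [CompleteSpace H]
    (e : HilbertBasis ℕ ℂ H)

theorem dg_apply {d : ℕ → ℝ} (h : BD d) (n : ℕ) : dg e d (e n) = (d n : ℂ) • e n := by
  rw [dg, dif_pos h]
  exact (exists_diag e d h.choose ((abs_nonneg (d 0)).trans (h.choose_spec 0))
    h.choose_spec).choose_spec.1 n

theorem dg_inner {d : ℕ → ℝ} (h : BD d) (x : H) (n : ℕ) :
    inner ℂ (e n) (dg e d x) = (d n : ℂ) * inner ℂ (e n) x := by
  rw [dg, dif_pos h]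
  exact (exists_diag e d h.choose ((abs_nonneg (d 0)).trans (h.choose_spec 0))
    h.choose_spec).choose_spec.2.2 x n

theorem dg_norm {d : ℕ → ℝ} {K : ℝ} (h : ∀ n, |d n| ≤ K) : ‖dg e d‖ ≤ K := by
  obtain ⟨D, h1, h2, -⟩ := exists_diag e d K ((abs_nonneg (d 0)).trans (h 0)) h
  rwa [ext_basis e (A := dg e d) (B := D) fun n => by rw [dg_apply e ⟨K, h⟩, h1]]

theorem dg_pos {d : ℕ → ℝ} (h : BD d) (hd : ∀ n, 0 ≤ d n) : (dg e d).IsPositive := by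
  rw [isPositive_iff_complex]
  intro x
  have := e.hasSum_inner_mul_inner (dg e d x) x
  have h2 : ∀ n, inner ℂ (dg e d x) (e n) * inner ℂ (e n) x
      = ((d n * ‖inner ℂ (e n) x‖ ^ 2 : ℝ) : ℂ) := by
    intro n
    rw [← inner_conj_symm, dg_inner e h]
    simp only [map_mul, Complex.conj_ofReal]
    rw [mul_assoc, ← Complex.normSq_eq_conj_mul_self, Complex.normSq_eq_norm_sq]
    simp
  simp_rw [h2] at this
  have h3 := Complex.hasSum_re this
  simp only [Complex.ofReal_re] at h3
  have h4 := (Complex.hasSum_ofReal (f := fun n => d n * ‖inner ℂ (e n) x‖ ^ 2)).2 h3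
  constructor
  · exact h4.unique this
  · exact h3.nonneg (fun n => mul_nonneg (hd n) (by positivity))

theorem BD.add {d d' : ℕ → ℝ} (h : BD d) (h' : BD d') : BD (d + d') := by
  obtain ⟨K, hK⟩ := h
  obtain ⟨K', hK'⟩ := h'
  exact ⟨K + K', fun n => (abs_add_le _ _).trans (add_le_add (hK n) (hK' n))⟩

theorem BD.mul {d d' : ℕ → ℝ} (h : BD d) (h' : BD d') : BD (d * d') := by
  obtain ⟨K, hK⟩ := h
  obtain ⟨K', hK'⟩ := h'
  refine ⟨K * K', fun n => ?_⟩
  rw [Pi.mul_apply, abs_mul]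
  exact mul_le_mul (hK n) (hK' n) (abs_nonneg _) ((abs_nonneg _).trans (hK n))

theorem BD.const (c : ℝ) : BD (fun _ => c) := ⟨|c|, fun _ => le_rfl⟩

theorem dg_add {d d' : ℕ → ℝ} (h : BD d) (h' : BD d') : dg e (d + d') = dg e d + dg e d' :=
  ext_basis e fun n => by simp [dg_apply e h, dg_apply e h', dg_apply e (h.add h'), add_smul]

theorem dg_smul {d : ℕ → ℝ} (h : BD d) (c : ℝ) :
    dg e ((fun _ => c) * d) = (c : ℂ) • dg e d :=
  ext_basis e fun n => by simp [dg_apply e h, dg_apply e ((BD.const c).mul h), mul_smul]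

theorem dg_mul {d d' : ℕ → ℝ} (h : BD d) (h' : BD d') : dg e (d * d') = dg e d ∘L dg e d' :=
  ext_basis e fun n => by
    simp [dg_apply e h, dg_apply e h', dg_apply e (h.mul h'), mul_smul]
    rw [smul_comm]

theorem dg_one : dg e (fun _ => 1) = 1 :=
  ext_basis e fun n => by simp [dg_apply e (BD.const 1)]

theorem sv_le (T F : H →L[ℂ] H) {n : ℕ} (h : LinearMap.rank (F : H →ₗ[ℂ] H) ≤ (n : Cardinal)) :
    sv T n ≤ ‖T - F‖ :=
  csInf_le ⟨0, by rintro _ ⟨F, -, rfl⟩; exact norm_nonneg _⟩ ⟨F, h, rfl⟩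

theorem sv_set_nonempty (T : H →L[ℂ] H) (n : ℕ) : {r : ℝ | ∃ F : H →L[ℂ] H,
    LinearMap.rank (F : H →ₗ[ℂ] H) ≤ (n : Cardinal) ∧ ‖T - F‖ = r}.Nonempty :=
  ⟨_, 0, by simp, rfl⟩

theorem le_sv (T : H →L[ℂ] H) {n : ℕ} {c : ℝ}
    (h : ∀ F : H →L[ℂ] H, LinearMap.rank (F : H →ₗ[ℂ] H) ≤ (n : Cardinal) → c ≤ ‖T - F‖) :
    c ≤ sv T n := by
  refine le_csInf (sv_set_nonempty T n) ?_
  rintro _ ⟨F, hF, rfl⟩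
  exact h F hF

theorem sv_nonneg (T : H →L[ℂ] H) (n : ℕ) : 0 ≤ sv T n := le_sv T fun _ _ => norm_nonneg _

theorem exists_of_sv_lt (T : H →L[ℂ] H) {n : ℕ} {c : ℝ} (h : sv T n < c) :
    ∃ F : H →L[ℂ] H, LinearMap.rank (F : H →ₗ[ℂ] H) ≤ (n : Cardinal) ∧ ‖T - F‖ < c := by
  obtain ⟨_, ⟨F, hF, rfl⟩, h2⟩ := exists_lt_of_csInf_lt (sv_set_nonempty T n) h
  exact ⟨F, hF, h2⟩

theorem compact_of_finrank (F : H →L[ℂ] H) {n : ℕ}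
    (h : LinearMap.rank (F : H →ₗ[ℂ] H) ≤ (n : Cardinal)) : IsCompactOperator F := by
  have : FiniteDimensional ℂ (LinearMap.range (F : H →ₗ[ℂ] H)) := by
    have : Module.rank ℂ (LinearMap.range (F : H →ₗ[ℂ] H)) < Cardinal.aleph0 :=
      lt_of_le_of_lt h (Cardinal.natCast_lt_aleph0)
    exact Module.rank_lt_aleph0_iff.1 this
  have : ProperSpace (LinearMap.range (F : H →ₗ[ℂ] H)) := FiniteDimensional.proper ℂ _
  let G : H →L[ℂ] LinearMap.range (F : H →ₗ[ℂ] H) :=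
    F.codRestrict _ (fun x => ⟨x, rfl⟩)
  exact (isCompactOperator_of_locallyCompactSpace_dom G).clm_comp (Submodule.subtypeL _)

theorem compact_of_sv {T : H →L[ℂ] H} (h : ∀ ε > 0, ∃ n, sv T n < ε) : IsCompactOperator T := by
  have hc := isClosed_setOfPred_isCompactOperator (σ₁₂ := RingHom.id ℂ) (M₁ := H) (M₂ := H)
  have : T ∈ closure {f : H →L[ℂ] H | IsCompactOperator f} := by
    rw [Metric.mem_closure_iff]
    intro ε hε
    obtain ⟨n, hn⟩ := h ε hε
    obtain ⟨F, h1, h2⟩ := exists_of_sv_lt T hn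
    exact ⟨F, compact_of_finrank F h1, by rwa [dist_eq_norm]⟩
  rwa [hc.closure_eq] at this

theorem exists_rec {α β : Type*} (p : α → Prop) (Q : α → β → Prop) (nx : α → β → α) (a0 : α)
    (h0 : p a0) (h : ∀ a, p a → ∃ b, Q a b ∧ p (nx a b)) :
    ∃ (a : ℕ → α) (b : ℕ → β), a 0 = a0 ∧
      ∀ n, p (a n) ∧ Q (a n) (b n) ∧ a (n + 1) = nx (a n) (b n) := by
  choose f hf using h
  let s : ℕ → {a // p a} := fun n => Nat.rec ⟨a0, h0⟩
    (fun _ a => ⟨nx a.1 (f a.1 a.2), (hf a.1 a.2).2⟩) n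
  exact ⟨fun n => (s n).1, fun n => f (s n).1 (s n).2, rfl,
    fun n => ⟨(s n).2, (hf _ _).1, rfl⟩⟩

theorem rank_comp_starProj (A : H →L[ℂ] H) (K : Submodule ℂ H) [FiniteDimensional ℂ K] :
    LinearMap.rank ((A ∘L K.starProjection : H →L[ℂ] H) : H →ₗ[ℂ] H)
      ≤ (Module.finrank ℂ K : Cardinal) := by
  have h1 : LinearMap.rank ((A ∘L K.starProjection : H →L[ℂ] H) : H →ₗ[ℂ] H)
      ≤ LinearMap.rank (K.starProjection : H →ₗ[ℂ] H) :=
    LinearMap.rank_comp_le_right (K.starProjection : H →ₗ[ℂ] H) (A : H →ₗ[ℂ] H)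
  refine h1.trans ?_
  rw [LinearMap.rank, Submodule.range_starProjection, Module.finrank_eq_rank]

theorem sub_comp_starProj (A : H →L[ℂ] H) (K : Submodule ℂ H) [FiniteDimensional ℂ K] :
    A - A ∘L K.starProjection = A ∘L Kᗮ.starProjection := by
  rw [Submodule.starProjection_orthogonal]
  ext x; simp

theorem sv_le_comp (A : H →L[ℂ] H) (K : Submodule ℂ H) [FiniteDimensional ℂ K] :
    sv A (Module.finrank ℂ K) ≤ ‖A ∘L Kᗮ.starProjection‖ := by
  rw [← sub_comp_starProj]
  exact sv_le A _ (rank_comp_starProj A K)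

/-- a non-compact operator factors the identity -/
theorem noncompact_factor (e : HilbertBasis ℕ ℂ H) (A : H →L[ℂ] H) {δ : ℝ} (hδ : 0 < δ) (h : ∀ n, δ ≤ sv A n) :
    ∃ B C : H →L[ℂ] H, B ∘L A ∘L C = 1 := by
  obtain ⟨K, x, -, hKx⟩ := exists_rec (α := Submodule ℂ H) (β := H)
    (fun K => FiniteDimensional ℂ K)
    (fun K x => ‖x‖ = 1 ∧ x ∈ Kᗮ ∧ δ / 2 ≤ ‖A x‖)
    (fun K x => K ⊔ (Submodule.span ℂ {x} ⊔ Submodule.span ℂ {adjoint A (A x)})) ⊥ inferInstance (by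
      intro K hK
      have hn : δ / 2 < ‖A ∘L Kᗮ.starProjection‖ := by
        have := (h (Module.finrank ℂ K)).trans (sv_le_comp A K)
        linarith
      obtain ⟨x, hx1, hx2⟩ := exists_lt_apply_of_lt_opNorm _ hn
      set y := Kᗮ.starProjection x with hy
      have hyK : y ∈ Kᗮ := Submodule.starProjection_apply_mem _ _
      have hy1 : ‖y‖ ≤ 1 := (Submodule.norm_starProjection_apply_le _ _).trans hx1.le
      have hy2 : δ / 2 < ‖A y‖ := hx2
      have hy0 : y ≠ 0 := by
        intro h0; rw [h0, map_zero, norm_zero] at hy2; linarith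
      have hy0' : 0 < ‖y‖ := norm_pos_iff.2 hy0
      refine ⟨((‖y‖⁻¹ : ℝ) : ℂ) • y, ⟨?_, Submodule.smul_mem _ _ hyK, ?_⟩, inferInstance⟩
      · rw [norm_smul]; simp [hy0'.ne']
      · rw [map_smul, norm_smul]
        simp only [Complex.norm_real, norm_inv, norm_norm]
        have : 1 ≤ ‖y‖⁻¹ := (one_le_inv₀ hy0').2 hy1
        nlinarith [norm_nonneg (A y)])
  have hmono : Monotone K := monotone_nat_of_le_succ fun n => by
    rw [(hKx n).2.2]; exact le_sup_left
  have hx1 : ∀ i j, i < j → inner ℂ (x i) (x j) = 0 := by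
    intro i j hij
    have : x i ∈ K (i + 1) := by
      rw [(hKx i).2.2]
      exact Submodule.mem_sup_right (Submodule.mem_sup_left (Submodule.mem_span_singleton_self _))
    exact ((K j).mem_orthogonal _).1 (hKx j).2.1.2.1 _ (hmono hij this)
  have hx2 : ∀ i j, i < j → inner ℂ (A (x i)) (A (x j)) = 0 := by
    intro i j hij
    have : adjoint A (A (x i)) ∈ K (i + 1) := by
      rw [(hKx i).2.2]
      exact Submodule.mem_sup_right (Submodule.mem_sup_right (Submodule.mem_span_singleton_self _))
    rw [← adjoint_inner_left]
    exact ((K j).mem_orthogonal _).1 (hKx j).2.1.2.1 _ (hmono hij this)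
  have hAx : ∀ n, δ / 2 ≤ ‖A (x n)‖ := fun n => (hKx n).2.1.2.2
  have hAx' : ∀ n, 0 < ‖A (x n)‖ := fun n => lt_of_lt_of_le (by linarith) (hAx n)
  have hxo : Orthonormal ℂ x := by
    refine ⟨fun n => (hKx n).2.1.1, fun i j hij => ?_⟩
    rcases lt_or_gt_of_ne hij with h | h
    · exact hx1 i j h
    · exact inner_eq_zero_symm.1 (hx1 j i h)
  have hyo : Orthonormal ℂ (fun n => ((‖A (x n)‖⁻¹ : ℝ) : ℂ) • A (x n)) := by
    refine ⟨fun n => ?_, fun i j hij => ?_⟩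
    · rw [norm_smul]; simp [(hAx' n).ne']
    · simp only [inner_smul_left, inner_smul_right]
      rcases lt_or_gt_of_ne hij with h | h
      · rw [hx2 i j h]; simp
      · rw [inner_eq_zero_symm.1 (hx2 j i h)]; simp
  obtain ⟨C, hC, -⟩ := exists_isom e hxo
  obtain ⟨W, hW, hW'⟩ := exists_isom e hyo
  have hbd : BD (fun n => ‖A (x n)‖⁻¹) := ⟨(δ / 2)⁻¹, fun n => by
    rw [abs_of_nonneg (by positivity)]
    exact inv_anti₀ (by linarith) (hAx n)⟩
  refine ⟨dg e (fun n => ‖A (x n)‖⁻¹) ∘L adjoint W, C, ext_basis e fun n => ?_⟩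
  have h1 : A (C (e n)) = ((‖A (x n)‖ : ℝ) : ℂ) • W (e n) := by
    rw [hC, hW, smul_smul, ← Complex.ofReal_mul, mul_inv_cancel₀ (hAx' n).ne']; simp
  have h2 : adjoint W (W (e n)) = e n := by
    have := congrArg (fun B : H →L[ℂ] H => B (e n)) hW'
    simpa using this
  simp only [comp_apply, h1, map_smul, h2, dg_apply e hbd, smul_smul, ← Complex.ofReal_mul,
    mul_inv_cancel₀ (hAx' n).ne']
  simp

theorem top_eigen (B : H →L[ℂ] H) (hB : B.IsPositive) (hc : IsCompactOperator B) (h0 : B ≠ 0) :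
    ∃ u : H, ‖u‖ = 1 ∧ B u = ((‖B‖ : ℝ) : ℂ) • u := by
  have : Nontrivial (H →L[ℂ] H) := ⟨B, 0, h0⟩
  have h1 : ‖B‖ ∈ spectrum ℝ B :=
    CStarAlgebra.norm_mem_spectrum_of_nonneg ((nonneg_iff_isPositive B).2 hB)
  have h2 : ((‖B‖ : ℝ) : ℂ) ∈ spectrum ℂ B := spectrum.algebraMap_mem ℂ h1
  have h3 : ((‖B‖ : ℝ) : ℂ) ≠ 0 := by simpa using h0
  obtain ⟨v, hv⟩ := ((hc.hasEigenvalue_iff_mem_spectrum h3).2 h2).exists_hasEigenvector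
  have hv0 : ‖v‖ ≠ 0 := norm_ne_zero_iff.2 hv.2
  have hv1 : B v = ((‖B‖ : ℝ) : ℂ) • v := hv.apply_eq_smul
  refine ⟨((‖v‖⁻¹ : ℝ) : ℂ) • v, ?_, ?_⟩
  · rw [norm_smul]; simp [hv0]
  · rw [map_smul, hv1, smul_comm]

theorem inf_dim (e : HilbertBasis ℕ ℂ H) (K : Submodule ℂ H) [FiniteDimensional ℂ K] :
    Kᗮ ≠ ⊥ := by
  intro h
  rw [Submodule.orthogonal_eq_bot_iff] at h
  subst h
  have : FiniteDimensional ℂ H := Module.finite_def.2 ((Submodule.fg_top _).1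
    (Module.finite_def.1 ‹_›) )
  exact Module.Finite.not_linearIndependent_of_infinite _ e.orthonormal.linearIndependent

theorem spec_step (e : HilbertBasis ℕ ℂ H) (A : H →L[ℂ] H) (hA : A.IsPositive)
    (hc : IsCompactOperator A)
    (K : Submodule ℂ H) [FiniteDimensional ℂ K] (hK : ∀ x ∈ K, A x ∈ K) :
    ∃ u : H, ‖u‖ = 1 ∧ u ∈ Kᗮ ∧ A u = ((‖A ∘L Kᗮ.starProjection‖ : ℝ) : ℂ) • u := by
  have hinv : ∀ x ∈ Kᗮ, A x ∈ Kᗮ := by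
    intro x hx
    rw [Submodule.mem_orthogonal] at hx ⊢
    intro y hy
    rw [← hA.inner_left_eq_inner_right]
    exact hx _ (hK y hy)
  by_cases h0 : A ∘L Kᗮ.starProjection = 0
  · obtain ⟨v, hv, hv0⟩ := Submodule.exists_mem_ne_zero_of_ne_bot (inf_dim e K)
    have hAv : A v = 0 := by
      have := congrArg (fun B : H →L[ℂ] H => B v) h0
      simpa [Submodule.starProjection_eq_self_iff.2 hv] using this
    refine ⟨((‖v‖⁻¹ : ℝ) : ℂ) • v, ?_, Submodule.smul_mem _ _ hv, ?_⟩
    · rw [norm_smul]; simp [hv0]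
    · rw [map_smul, hAv, h0]; simp
  · have heq : A ∘L Kᗮ.starProjection = Kᗮ.starProjection ∘L A ∘L Kᗮ.starProjection := by
      ext x
      exact (Submodule.starProjection_eq_self_iff.2
        (hinv _ (Submodule.starProjection_apply_mem _ _))).symm
    have hp : (A ∘L Kᗮ.starProjection).IsPositive := by
      rw [heq]; exact hA.conj_starProjection _
    obtain ⟨u, hu1, hu2⟩ := top_eigen _ hp (hc.comp_clm _) h0
    have hn : ((‖A ∘L Kᗮ.starProjection‖ : ℝ) : ℂ) ≠ 0 := by simpa using h0
    have huK : u ∈ Kᗮ := by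
      rw [← Submodule.smul_mem_iff _ hn, ← hu2]
      exact hinv _ (Submodule.starProjection_apply_mem _ _)
    refine ⟨u, hu1, huK, ?_⟩
    rw [← hu2, comp_apply, Submodule.starProjection_eq_self_iff.2 huK]

theorem sv_lower (A : H →L[ℂ] H) {u : ℕ → H} (hu : Orthonormal ℂ u) {a : ℕ → ℝ}
    (ha : Antitone a) (ha0 : ∀ n, 0 ≤ a n) (hAu : ∀ n, A (u n) = ((a n : ℝ) : ℂ) • u n) (n : ℕ) :
    a n ≤ sv A n := by
  refine le_sv A fun F hF => ?_
  have hfd : FiniteDimensional ℂ (LinearMap.range (F : H →ₗ[ℂ] H)) := by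
    have : Module.rank ℂ (LinearMap.range (F : H →ₗ[ℂ] H)) < Cardinal.aleph0 :=
      lt_of_le_of_lt hF (Cardinal.natCast_lt_aleph0)
    exact Module.rank_lt_aleph0_iff.1 this
  have hfr : Module.finrank ℂ (LinearMap.range (F : H →ₗ[ℂ] H)) ≤ n :=
    Module.finrank_le_of_rank_le hF
  let L : (Fin (n + 1) → ℂ) →ₗ[ℂ] LinearMap.range (F : H →ₗ[ℂ] H) :=
    (F : H →ₗ[ℂ] H).rangeRestrict ∘ₗ Fintype.linearCombination ℂ (fun i : Fin (n + 1) => u i)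
  have hL : LinearMap.ker L ≠ ⊥ := LinearMap.ker_ne_bot_of_finrank_lt (by simp; omega)
  obtain ⟨c, hc, hc0⟩ := Submodule.exists_mem_ne_zero_of_ne_bot hL
  set x : H := ∑ i : Fin (n + 1), c i • u i with hx
  have hFx : F x = 0 := by
    have := congrArg Subtype.val (LinearMap.mem_ker.1 hc)
    simpa [L, Fintype.linearCombination_apply, hx] using this
  have huf : Orthonormal ℂ (fun i : Fin (n + 1) => u i) :=
    hu.comp _ Fin.val_injective
  have hnx : ‖x‖ ^ 2 = ∑ i, ‖c i‖ ^ 2 := by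
    have h1 := huf.inner_sum c c Finset.univ
    rw [← hx, inner_self_eq_norm_sq_to_K] at h1
    have h2 : ((‖x‖ ^ 2 : ℝ) : ℂ) = ((∑ i, ‖c i‖ ^ 2 : ℝ) : ℂ) := by
      push_cast
      refine h1.trans (Finset.sum_congr rfl fun i _ => ?_)
      rw [← Complex.normSq_eq_conj_mul_self, Complex.normSq_eq_norm_sq]; simp
    exact_mod_cast h2
  have hAx : A x = ∑ i : Fin (n + 1), (((a i : ℝ) : ℂ) * c i) • u i := by
    simp only [hx, map_sum, map_smul, hAu, smul_smul]
    simp [mul_comm]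
  have hnAx : ‖A x‖ ^ 2 = ∑ i : Fin (n + 1), a i ^ 2 * ‖c i‖ ^ 2 := by
    have h1 := huf.inner_sum (fun i : Fin (n + 1) => ((a i : ℝ) : ℂ) * c i)
      (fun i : Fin (n + 1) => ((a i : ℝ) : ℂ) * c i) Finset.univ
    rw [← hAx, inner_self_eq_norm_sq_to_K] at h1
    have h2 : ((‖A x‖ ^ 2 : ℝ) : ℂ)
        = ((∑ i : Fin (n + 1), a i ^ 2 * ‖c i‖ ^ 2 : ℝ) : ℂ) := by
      push_cast
      refine h1.trans (Finset.sum_congr rfl fun i _ => ?_)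
      rw [← Complex.normSq_eq_conj_mul_self, Complex.normSq_eq_norm_sq]; simp [mul_pow]
    exact_mod_cast h2
  have hx0 : 0 < ‖x‖ := by
    have : 0 < ‖x‖ ^ 2 := by
      rw [hnx]
      obtain ⟨i, hi⟩ := Function.ne_iff.1 hc0
      refine Finset.sum_pos' (fun _ _ => by positivity) ⟨i, Finset.mem_univ _, ?_⟩
      have : 0 < ‖c i‖ := norm_pos_iff.2 hi
      positivity
    exact lt_of_le_of_ne (norm_nonneg _) (fun h0 => by rw [← h0] at this; simp at this)
  have h1 : (a n * ‖x‖) ^ 2 ≤ ‖A x‖ ^ 2 := by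
    rw [mul_pow, hnx, hnAx, Finset.mul_sum]
    refine Finset.sum_le_sum fun i _ => ?_
    have : a n ≤ a i := ha (Nat.lt_succ_iff.1 i.2)
    have := ha0 n
    gcongr
  have h2 : a n * ‖x‖ ≤ ‖A x‖ := le_of_sq_le_sq h1 (norm_nonneg _)
  have h3 : ‖A x‖ ≤ ‖A - F‖ * ‖x‖ := by
    have := (A - F).le_opNorm x
    rwa [sub_apply, hFx, sub_zero] at this
  exact le_of_mul_le_mul_right (h2.trans h3) hx0

theorem spectral (e : HilbertBasis ℕ ℂ H) (A : H →L[ℂ] H) (hA : A.IsPositive)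
    (h : ∀ ε > 0, ∃ n, sv A n < ε) :
    Antitone (sv A) ∧ BD (sv A) ∧ ∃ U : H →L[ℂ] H, adjoint U ∘L U = 1 ∧
      A = U ∘L dg e (sv A) ∘L adjoint U := by
  have hc := compact_of_sv h
  obtain ⟨K, u, hK0, hK⟩ := exists_rec (α := Submodule ℂ H) (β := H)
    (fun K => FiniteDimensional ℂ K ∧ ∀ x ∈ K, A x ∈ K)
    (fun K u => ‖u‖ = 1 ∧ u ∈ Kᗮ ∧ A u = ((‖A ∘L Kᗮ.starProjection‖ : ℝ) : ℂ) • u)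
    (fun K x => K ⊔ Submodule.span ℂ {x}) ⊥ ⟨inferInstance, by simp⟩ (by
      rintro K ⟨hK, hK'⟩
      obtain ⟨u, hu⟩ := spec_step e A hA hc K hK'
      refine ⟨u, hu, inferInstance, ?_⟩
      intro x hx
      obtain ⟨y, hy, z, hz, rfl⟩ := Submodule.mem_sup.1 hx
      rw [map_add]
      refine Submodule.add_mem_sup (hK' y hy) ?_
      obtain ⟨c, rfl⟩ := Submodule.mem_span_singleton.1 hz
      rw [map_smul, hu.2.2]
      exact Submodule.smul_mem _ _ (Submodule.smul_mem _ _ (Submodule.mem_span_singleton_self _)))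
  have hfd : ∀ n, FiniteDimensional ℂ (K n) := fun n => (hK n).1.1
  have hmono : Monotone K := monotone_nat_of_le_succ fun n => by
    rw [(hK n).2.2]; exact le_sup_left
  have humem : ∀ n, u n ∈ K (n + 1) := fun n => by
    rw [(hK n).2.2]
    exact Submodule.mem_sup_right (Submodule.mem_span_singleton_self _)
  have hu1 : ∀ i j, i < j → inner ℂ (u i) (u j) = 0 := fun i j hij =>
    ((K j).mem_orthogonal _).1 (hK j).2.1.2.1 _ (hmono hij (humem i))
  have huo : Orthonormal ℂ u := by
    refine ⟨fun n => (hK n).2.1.1, fun i j hij => ?_⟩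
    rcases lt_or_gt_of_ne hij with h | h
    · exact hu1 i j h
    · exact inner_eq_zero_symm.1 (hu1 j i h)
  set a : ℕ → ℝ := fun n => ‖A ∘L (K n)ᗮ.starProjection‖ with ha
  have ha0 : ∀ n, 0 ≤ a n := fun n => norm_nonneg _
  have haa : Antitone a := by
    intro m n hmn
    have h1 : A ∘L (K n)ᗮ.starProjection
        = (A ∘L (K m)ᗮ.starProjection) ∘L (K n)ᗮ.starProjection := by
      ext x
      have hx : (K n)ᗮ.starProjection x ∈ (K m)ᗮ :=
        Submodule.orthogonal_le (hmono hmn) (Submodule.starProjection_apply_mem _ _)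
      rw [comp_apply, comp_apply, comp_apply, Submodule.starProjection_eq_self_iff.2 hx]
    simp only [ha]
    rw [h1]
    refine (opNorm_comp_le _ _).trans ?_
    exact mul_le_of_le_one_right (norm_nonneg _) (Submodule.starProjection_norm_le _)
  have hAu : ∀ n, A (u n) = ((a n : ℝ) : ℂ) • u n := fun n => (hK n).2.1.2.2
  have hfr : ∀ n, Module.finrank ℂ (K n) ≤ n := by
    intro n
    induction n with
    | zero => rw [hK0]; simp
    | succ n ih =>
      rw [(hK n).2.2]
      refine (Submodule.finrank_add_le_finrank_add_finrank _ _).trans (add_le_add ih ?_)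
      exact (finrank_span_le_card _).trans (by simp)
  have hsv : sv A = a := by
    funext n
    refine le_antisymm ?_ (sv_lower A huo haa ha0 hAu n)
    simp only [ha]
    rw [← sub_comp_starProj]
    exact sv_le A _ ((rank_comp_starProj A (K n)).trans (by exact_mod_cast hfr n))
  have hbd : BD a := ⟨a 0, fun n => by rw [abs_of_nonneg (ha0 n)]; exact haa (Nat.zero_le n)⟩
  rw [hsv] at h ⊢
  refine ⟨haa, hbd, ?_⟩
  obtain ⟨U, hU, hU'⟩ := exists_isom e huo
  refine ⟨U, hU', ?_⟩
  have h1 : A ∘L U = U ∘L dg e a := ext_basis e fun n => by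
    simp [hU, hAu, dg_apply e hbd]
  have h2 : A = A ∘L U ∘L adjoint U := by
    ext x
    set y := x - U (adjoint U x) with hy
    have hyu : ∀ n, inner ℂ (u n) y = 0 := by
      intro n
      rw [← hU, ← adjoint_inner_right, hy, map_sub]
      have : adjoint U (U (adjoint U x)) = adjoint U x := by
        have := congrArg (fun B : H →L[ℂ] H => B (adjoint U x)) hU'
        simpa using this
      rw [this]; simp
    have hyK : ∀ n, y ∈ (K n)ᗮ := by
      intro n
      induction n with
      | zero => rw [hK0]; simp
      | succ n ih =>
        rw [(hK n).2.2, ← Submodule.inf_orthogonal]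
        exact ⟨ih, Submodule.mem_orthogonal_singleton_iff_inner_right.2 (hyu n)⟩
    have hAy : ∀ n, ‖A y‖ ≤ a n * ‖y‖ := by
      intro n
      have := (A ∘L (K n)ᗮ.starProjection).le_opNorm y
      rwa [comp_apply, Submodule.starProjection_eq_self_iff.2 (hyK n)] at this
    have : ‖A y‖ = 0 := by
      by_contra hne
      have hpos : 0 < ‖A y‖ := lt_of_le_of_ne (norm_nonneg _) (Ne.symm hne)
      have hy0 : 0 < ‖y‖ := by
        by_contra h0
        have : y = 0 := by simpa using h0
        rw [this] at hpos; simp at hpos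
      obtain ⟨n, hn⟩ := h (‖A y‖ / ‖y‖) (by positivity)
      rw [lt_div_iff₀ hy0] at hn
      exact absurd (hAy n) (not_le.2 hn)
    have := norm_eq_zero.1 this
    rw [hy, map_sub, sub_eq_zero] at this
    exact this
  calc A = A ∘L U ∘L adjoint U := h2
    _ = (A ∘L U) ∘L adjoint U := rfl
    _ = _ := by rw [h1]; rfl

theorem adj_app {U : H →L[ℂ] H} (hU : adjoint U ∘L U = 1) (x : H) : adjoint U (U x) = x := by
  have := congrArg (fun B : H →L[ℂ] H => B x) hU
  simpa using this

theorem inner_isom {U : H →L[ℂ] H} (hU : adjoint U ∘L U = 1) (x y : H) :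
    inner ℂ (U x) (U y) = inner ℂ x y := by
  rw [← adjoint_inner_right, adj_app hU]

theorem norm_isom {U : H →L[ℂ] H} (hU : adjoint U ∘L U = 1) (x : H) : ‖U x‖ = ‖x‖ :=
  (norm_map_iff_adjoint_comp_self U).2 hU x

theorem norm_adj_isom {U : H →L[ℂ] H} (hU : adjoint U ∘L U = 1) (x : H) :
    ‖adjoint U x‖ ≤ ‖x‖ := by
  have h1 : ‖U‖ ≤ 1 := opNorm_le_bound _ zero_le_one fun x => by rw [norm_isom hU, one_mul]
  have h2 : ‖adjoint U‖ ≤ 1 := by rwa [LinearIsometryEquiv.norm_map]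
  simpa using (adjoint U).le_of_opNorm_le h2 x

structure Tr (I : Set (H →L[ℂ] H)) (φ : (H →L[ℂ] H) → ℂ) : Prop where
  hI_add : ∀ S T : H →L[ℂ] H, S ∈ I → T ∈ I → S + T ∈ I
  hI_smul : ∀ (c : ℂ) (T : H →L[ℂ] H), T ∈ I → c • T ∈ I
  hI_left : ∀ (S T : H →L[ℂ] H), T ∈ I → S ∘L T ∈ I
  hI_right : ∀ (S T : H →L[ℂ] H), T ∈ I → T ∘L S ∈ I
  hφ_add : ∀ S T : H →L[ℂ] H, S ∈ I → T ∈ I → φ (S + T) = φ S + φ T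
  hφ_smul : ∀ (c : ℂ) (T : H →L[ℂ] H), T ∈ I → φ (c • T) = c * φ T
  hφ_tr : ∀ (T S : H →L[ℂ] H), T ∈ I → φ (S ∘L T) = φ (T ∘L S)
  hφ_pos : ∀ T : H →L[ℂ] H, T ∈ I → T.IsPositive → ∃ r : ℝ, 0 ≤ r ∧ φ T = (r : ℂ)

variable {I : Set (H →L[ℂ] H)} {φ : (H →L[ℂ] H) → ℂ}

theorem Tr.sub_mem (t : Tr I φ) {A B : H →L[ℂ] H} (hA : A ∈ I) (hB : B ∈ I) : A - B ∈ I := by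
  have := t.hI_add _ _ hA (t.hI_smul (-1) _ hB)
  rwa [neg_one_smul, ← sub_eq_add_neg] at this

theorem Tr.map_sub (t : Tr I φ) {A B : H →L[ℂ] H} (hA : A ∈ I) (hB : B ∈ I) :
    φ (A - B) = φ A - φ B := by
  have := t.hφ_add _ _ hA (t.hI_smul (-1) _ hB)
  rw [t.hφ_smul _ _ hB, neg_one_smul, ← sub_eq_add_neg] at this
  rw [this]; ring

theorem Tr.mono (t : Tr I φ) {A B : H →L[ℂ] H} (hA : A ∈ I) (hB : B ∈ I)
    (h : (B - A).IsPositive) : (φ A).re ≤ (φ B).re := by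
  obtain ⟨r, h0, hr⟩ := t.hφ_pos _ (t.sub_mem hB hA) h
  rw [t.map_sub hB hA] at hr
  have := congrArg Complex.re hr
  simp at this
  linarith

theorem Tr.eq_re (t : Tr I φ) {A : H →L[ℂ] H} (hA : A ∈ I) (h : A.IsPositive) :
    φ A = ((φ A).re : ℂ) := by
  obtain ⟨r, h0, hr⟩ := t.hφ_pos _ hA h
  rw [hr]; simp

theorem Tr.re_nonneg (t : Tr I φ) {A : H →L[ℂ] H} (hA : A ∈ I) (h : A.IsPositive) :
    0 ≤ (φ A).re := by
  obtain ⟨r, h0, hr⟩ := t.hφ_pos _ hA h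
  rw [hr]; simpa using h0

theorem Tr.conj_eq (t : Tr I φ) {A U D : H →L[ℂ] H} (hA : A ∈ I) (hU : adjoint U ∘L U = 1)
    (h : A = U ∘L D ∘L adjoint U) : D ∈ I ∧ φ A = φ D := by
  have h1 : D = adjoint U ∘L A ∘L U := by
    ext x; simp [h, adj_app hU]
  have hD : D ∈ I := by
    rw [h1]; exact t.hI_left _ _ (t.hI_right _ _ hA)
  refine ⟨hD, ?_⟩
  rw [h, t.hφ_tr _ _ (t.hI_right _ _ hD), comp_assoc, hU]; rfl

theorem orth_comp (e : HilbertBasis ℕ ℂ H) {f : ℕ → ℕ} (hf : Function.Injective f) :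
    Orthonormal ℂ (fun n => e (f n)) := e.orthonormal.comp f hf

theorem Tr.zero_of_one (t : Tr I φ) (e : HilbertBasis ℕ ℂ H) (h1 : (1 : H →L[ℂ] H) ∈ I)
    {A : H →L[ℂ] H} (hA : A.IsPositive) (hAI : A ∈ I) : φ A = 0 := by
  obtain ⟨U, hU, hU'⟩ := exists_isom e (orth_comp e (f := fun n => 2 * n) (fun a b h => by
    simpa using h))
  obtain ⟨V, hV, hV'⟩ := exists_isom e (orth_comp e (f := fun n => 2 * n + 1) (fun a b h => by
    simpa using h))
  have hUV : adjoint U ∘L V = 0 := ext_basis e fun n => by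
    apply e.repr.injective
    ext m
    rw [e.repr_apply_apply, e.repr_apply_apply, comp_apply, adjoint_inner_right, hU, hV,
      orthonormal_iff_ite.1 e.orthonormal, if_neg (by omega)]
    simp
  have hVU : adjoint V ∘L U = 0 := by
    have := congrArg adjoint hUV
    simpa [adjoint_comp] using this
  have hall : ∀ B : H →L[ℂ] H, B ∈ I := fun B => by
    exact t.hI_left B _ h1
  have hsum : U ∘L adjoint U + V ∘L adjoint V = 1 := ext_basis e fun n => by
    obtain ⟨m, rfl | rfl⟩ := Nat.even_or_odd' n
    · rw [← hU]
      have := congrArg (fun B : H →L[ℂ] H => B (e m)) hVU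
      simp only [comp_apply] at this
      simp [adj_app hU', this]
    · rw [← hV]
      have := congrArg (fun B : H →L[ℂ] H => B (e m)) hUV
      simp only [comp_apply] at this
      simp [adj_app hV', this]
  have hφ1 : φ 1 = 0 := by
    have h2 := t.hφ_add (U ∘L adjoint U) (V ∘L adjoint V) (hall _) (hall _)
    rw [hsum, t.hφ_tr _ U (hall _), t.hφ_tr _ V (hall _), hU', hV'] at h2
    simpa using h2
  have hle : (((‖A‖ : ℝ) : ℂ) • (1 : H →L[ℂ] H) - A).IsPositive := by
    rw [← ContinuousLinearMap.le_def]
    have := IsSelfAdjoint.le_algebraMap_norm_self (a := A) hA.isSelfAdjoint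
    rwa [Algebra.algebraMap_eq_smul_one] at this
  have h3 := t.mono hAI (hall _) hle
  rw [t.hφ_smul _ _ h1, hφ1, mul_zero, Complex.zero_re] at h3
  rw [t.eq_re hAI hA, le_antisymm h3 (t.re_nonneg hAI hA)]; simp

theorem dg_tail (e : HilbertBasis ℕ ℂ H) {b : ℕ → ℝ} (hb : Antitone b) (hb0 : ∀ n, 0 ≤ b n)
    (n : ℕ) (z : H) (hz : ∀ i < n, inner ℂ (e i) z = 0) : ‖dg e b z‖ ≤ b n * ‖z‖ := by
  have hbd : BD b := ⟨b 0, fun n => by rw [abs_of_nonneg (hb0 n)]; exact hb (Nat.zero_le n)⟩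
  set b' : ℕ → ℝ := fun i => if i < n then 0 else b i with hb'
  have h1 : ∀ i, |b' i| ≤ b n := by
    intro i
    simp only [hb']
    split_ifs with h
    · simpa using hb0 n
    · rw [abs_of_nonneg (hb0 i)]; exact hb (not_lt.1 h)
  have h2 : dg e b z = dg e b' z := by
    apply e.repr.injective
    ext i
    rw [e.repr_apply_apply, e.repr_apply_apply, dg_inner e hbd, dg_inner e ⟨_, h1⟩]
    by_cases h : i < n
    · simp [hz i h]
    · simp [hb', h]
  rw [h2]
  exact (dg e b').le_of_opNorm_le (dg_norm e h1) z

theorem sv_le_sqrt (e : HilbertBasis ℕ ℂ H) (T U : H →L[ℂ] H) {b : ℕ → ℝ} (hb : Antitone b)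
    (hb0 : ∀ n, 0 ≤ b n) (hU : adjoint U ∘L U = 1)
    (h : adjoint T ∘L T = U ∘L dg e b ∘L adjoint U) (n : ℕ) : sv T n ≤ √(b n) := by
  classical
  let s : Finset H := (Finset.range n).image (fun i => U (e i))
  let K : Submodule ℂ H := Submodule.span ℂ (s : Set H)
  have hfd : FiniteDimensional ℂ K := FiniteDimensional.span_finset ℂ s
  have hfr : Module.finrank ℂ K ≤ n :=
    (finrank_span_finset_le_card s).trans (Finset.card_image_le.trans (by simp))
  have h1 : sv T n ≤ ‖T ∘L Kᗮ.starProjection‖ := by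
    rw [← sub_comp_starProj]
    exact sv_le T _ ((rank_comp_starProj T K).trans (by exact_mod_cast hfr))
  refine h1.trans (opNorm_le_bound _ (Real.sqrt_nonneg _) fun x => ?_)
  set y := Kᗮ.starProjection x with hy
  have hyK : y ∈ Kᗮ := Submodule.starProjection_apply_mem _ _
  have hy1 : ‖y‖ ≤ ‖x‖ := Submodule.norm_starProjection_apply_le _ _
  have hz : ∀ i < n, inner ℂ (e i) (adjoint U y) = 0 := by
    intro i hi
    rw [adjoint_inner_right]
    exact (K.mem_orthogonal _).1 hyK _ (Submodule.subset_span (by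
      simp only [s, Finset.coe_image, Finset.coe_range]
      exact ⟨i, hi, rfl⟩))
  have h2 : ‖adjoint T (T y)‖ ≤ b n * ‖y‖ := by
    have := congrArg (fun B : H →L[ℂ] H => B y) h
    simp only [comp_apply] at this
    rw [this, norm_isom hU]
    exact (dg_tail e hb hb0 n _ hz).trans (mul_le_mul_of_nonneg_left (norm_adj_isom hU y) (hb0 n))
  have h3 : ‖T y‖ ^ 2 ≤ b n * ‖y‖ ^ 2 := by
    have h4 : ‖T y‖ ^ 2 = RCLike.re (inner ℂ (adjoint T (T y)) y) := by
      rw [adjoint_inner_left, inner_self_eq_norm_sq]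
    rw [h4]
    refine (re_inner_le_norm _ _).trans ?_
    nlinarith [norm_nonneg y]
  change ‖T y‖ ≤ _
  refine le_trans ?_ (mul_le_mul_of_nonneg_left hy1 (Real.sqrt_nonneg _))
  refine le_of_sq_le_sq ?_ (by positivity)
  rw [mul_pow, Real.sq_sqrt (hb0 n)]
  exact h3

theorem Tr.exists_diag (t : Tr I φ) (e : HilbertBasis ℕ ℂ H)
    (hsm : ∀ A ∈ I, ∀ ε > 0, ∃ n, sv A n < ε) {T : H →L[ℂ] H} (hT : T ∈ I)
    (hns : ¬ Summable (fun n => sv T n)) :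
    ∃ d : ℕ → ℝ, BD d ∧ (∀ n, 0 < d n) ∧ ¬ Summable d ∧ dg e d ∈ I := by
  have hBI : adjoint T ∘L T ∈ I := t.hI_left _ _ hT
  obtain ⟨ha, ⟨M, hM⟩, U, hU, hBU⟩ := spectral e _ (isPositive_adjoint_comp_self T) (hsm _ hBI)
  set b := sv (adjoint T ∘L T) with hb
  have hb0 : ∀ n, 0 ≤ b n := fun n => sv_nonneg _ n
  have hle := sv_le_sqrt e T U ha hb0 hU hBU
  have hbpos : ∀ n, 0 < b n := by
    intro m
    refine lt_of_le_of_ne (hb0 m) fun h0 => hns ?_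
    refine summable_of_ne_finset_zero (s := Finset.range m) fun n hn => ?_
    have hmn : m ≤ n := by simpa using hn
    have : b n = 0 := le_antisymm ((ha hmn).trans h0.symm.le) (hb0 n)
    refine le_antisymm ?_ (sv_nonneg _ _)
    simpa [this] using hle n
  have hd : ∀ n, 0 < √(b n) := fun n => Real.sqrt_pos.2 (hbpos n)
  have hbd : BD b := ⟨M, hM⟩
  have hbd' : BD (fun n => √(b n)) := ⟨√M, fun n => by
    rw [abs_of_pos (hd n)]
    exact Real.sqrt_le_sqrt ((le_abs_self _).trans (hM n))⟩
  refine ⟨fun n => √(b n), hbd', hd, fun hs => hns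
    (Summable.of_nonneg_of_le (fun n => sv_nonneg T n) hle hs), ?_⟩
  have hin : ∀ i j, inner ℂ (T (U (e i))) (T (U (e j))) = (b j : ℂ) * inner ℂ (e i) (e j) := by
    intro i j
    rw [← adjoint_inner_right]
    have := congrArg (fun B : H →L[ℂ] H => B (U (e j))) hBU
    simp only [comp_apply] at this
    rw [this, inner_isom hU, adj_app hU, dg_inner e hbd]
    by_cases h : i = j
    · rw [h]
    · rw [orthonormal_iff_ite.1 e.orthonormal, if_neg h]; simp
  have hyo : Orthonormal ℂ (fun n => (((√(b n))⁻¹ : ℝ) : ℂ) • T (U (e n))) := by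
    rw [orthonormal_iff_ite]
    intro i j
    rw [inner_smul_left, inner_smul_right, hin, orthonormal_iff_ite.1 e.orthonormal]
    split_ifs with h
    · subst h
      rw [Complex.conj_ofReal, mul_one, ← Complex.ofReal_mul, ← Complex.ofReal_mul]
      have : (√(b i))⁻¹ * ((√(b i))⁻¹ * b i) = 1 := by
        have h1 := (hd i).ne'
        field_simp
        exact (Real.sq_sqrt (hb0 i)).symm
      rw [this]; simp
    · simp
  obtain ⟨W, hW, hW'⟩ := exists_isom e hyo
  have : dg e (fun n => √(b n)) = adjoint W ∘L T ∘L U := ext_basis e fun n => by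
    have h1 : T (U (e n)) = ((√(b n) : ℝ) : ℂ) • W (e n) := by
      rw [hW, smul_smul, ← Complex.ofReal_mul, mul_inv_cancel₀ (hd n).ne']; simp
    rw [dg_apply e hbd', comp_apply, comp_apply, h1, _root_.map_smul, adj_app hW']
  rw [this]
  exact t.hI_left _ _ (t.hI_right _ _ hT)

def ind (N : ℕ) : ℕ → ℝ := fun n => if n < N then 1 else 0
def sgl (k : ℕ) : ℕ → ℝ := fun n => if n = k then 1 else 0

theorem BD.ind (N : ℕ) : BD (ind N) := ⟨1, fun n => by unfold PT.ind; split_ifs <;> simp⟩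
theorem BD.sgl (N : ℕ) : BD (sgl N) := ⟨1, fun n => by unfold PT.sgl; split_ifs <;> simp⟩

theorem Tr.sgl_mem (t : Tr I φ) (e : HilbertBasis ℕ ℂ H) {d : ℕ → ℝ} (hd : BD d)
    (hpos : ∀ n, 0 < d n) (hI : dg e d ∈ I) (k : ℕ) : dg e (sgl k) ∈ I := by
  have h1 : (fun _ => (d k)⁻¹ : ℕ → ℝ) * (sgl k * d) = sgl k := by
    funext n
    simp only [Pi.mul_apply, sgl]
    split_ifs with h
    · subst h; rw [one_mul, inv_mul_cancel₀ (hpos n).ne']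
    · simp
  rw [← h1, dg_smul e ((BD.sgl k).mul hd), dg_mul e (BD.sgl k) hd]
  exact t.hI_smul _ _ (t.hI_left _ _ hI)

theorem Tr.sgl_eq (t : Tr I φ) (e : HilbertBasis ℕ ℂ H) (h : ∀ k, dg e (sgl k) ∈ I) (k : ℕ) :
    φ (dg e (sgl k)) = φ (dg e (sgl 0)) := by
  let X : H →L[ℂ] H := InnerProductSpace.rankOne ℂ (e k) (e 0)
  let Y : H →L[ℂ] H := InnerProductSpace.rankOne ℂ (e 0) (e k)
  have o := orthonormal_iff_ite.1 e.orthonormal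
  have hX : X = dg e (sgl k) ∘L X := ext_basis e fun n => by
    simp [X, dg_apply e (BD.sgl k), sgl]
  have h1 : dg e (sgl k) = X ∘L Y := ext_basis e fun n => by
    simp only [X, Y, dg_apply e (BD.sgl k), sgl, comp_apply, InnerProductSpace.rankOne_apply,
      _root_.map_smul, o]
    by_cases hn : n = k
    · subst hn; simp
    · simp [hn, Ne.symm hn]
  have h2 : dg e (sgl 0) = Y ∘L X := ext_basis e fun n => by
    simp only [X, Y, dg_apply e (BD.sgl 0), sgl, comp_apply, InnerProductSpace.rankOne_apply,
      _root_.map_smul, o]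
    by_cases hn : n = 0
    · subst hn; simp
    · simp [hn, Ne.symm hn]
  have hXI : X ∈ I := by rw [hX]; exact t.hI_right _ _ (h k)
  rw [h1, h2, t.hφ_tr _ _ hXI]

theorem Tr.fin (t : Tr I φ) (e : HilbertBasis ℕ ℂ H) (h : ∀ k, dg e (sgl k) ∈ I) {d : ℕ → ℝ}
    (hd : BD d) (N : ℕ) : dg e (d * ind N) ∈ I ∧
      φ (dg e (d * ind N)) = ((∑ n ∈ Finset.range N, d n : ℝ) : ℂ) * φ (dg e (sgl 0)) := by
  induction N with
  | zero =>
    have h1 : d * ind 0 = (fun _ => 0) * sgl 0 := by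
      funext n; simp [ind]
    rw [h1, dg_smul e (BD.sgl 0)]
    exact ⟨t.hI_smul _ _ (h 0), by rw [t.hφ_smul _ _ (h 0)]; simp⟩
  | succ N ih =>
    have h1 : d * ind (N + 1) = d * ind N + (fun _ => d N) * sgl N := by
      funext n
      simp only [Pi.mul_apply, Pi.add_apply, ind, sgl]
      rcases lt_trichotomy n N with h | h | h
      · simp [h, h.ne, h.trans (Nat.lt_succ_self N)]
      · simp [h]
      · simp [h.ne', not_lt.2 h.le, not_lt.2 (Nat.succ_le_of_lt h)]
    rw [h1, dg_add e (hd.mul (BD.ind N)) ((BD.const _).mul (BD.sgl N)), dg_smul e (BD.sgl N)]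
    have h2 := t.hI_smul (d N : ℂ) _ (h N)
    refine ⟨t.hI_add _ _ ih.1 h2, ?_⟩
    rw [t.hφ_add _ _ ih.1 h2, ih.2, t.hφ_smul _ _ (h N), t.sgl_eq e h N, Finset.sum_range_succ]
    push_cast; ring

theorem Tr.ind_zero (t : Tr I φ) (e : HilbertBasis ℕ ℂ H) {d : ℕ → ℝ} (hd : BD d)
    (hpos : ∀ n, 0 < d n) (hns : ¬ Summable d) (hI : dg e d ∈ I) (N : ℕ) :
    dg e (ind N) ∈ I ∧ φ (dg e (ind N)) = 0 := by
  have hs := t.sgl_mem e hd hpos hI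
  have hsp : (dg e (sgl 0)).IsPositive := dg_pos e (BD.sgl 0) fun n => by
    unfold sgl; split_ifs <;> simp
  have hc0 := t.re_nonneg (hs 0) hsp
  have hle : ∀ N, (∑ n ∈ Finset.range N, d n) * (φ (dg e (sgl 0))).re ≤ (φ (dg e d)).re := by
    intro N
    have hf := t.fin e hs hd N
    have h1 : dg e d - dg e (d * ind N) = dg e (d + (fun _ => -1) * (d * ind N)) := by
      rw [dg_add e hd ((BD.const _).mul (hd.mul (BD.ind N))), dg_smul e (hd.mul (BD.ind N))]
      simp [sub_eq_add_neg]
    have h2 := t.mono hf.1 hI (by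
      rw [h1]
      refine dg_pos e (hd.add ((BD.const _).mul (hd.mul (BD.ind N)))) fun n => ?_
      simp only [Pi.add_apply, Pi.mul_apply, ind]
      have := (hpos n).le
      split_ifs <;> simp [this])
    rw [hf.2, Complex.re_ofReal_mul] at h2
    exact h2
  have hc : (φ (dg e (sgl 0))).re = 0 := by
    by_contra hne
    have hc1 : 0 < (φ (dg e (sgl 0))).re := lt_of_le_of_ne hc0 (Ne.symm hne)
    exact hns (summable_of_sum_range_le (c := (φ (dg e d)).re / (φ (dg e (sgl 0))).re)
      (fun n => (hpos n).le) fun N => by rw [le_div_iff₀ hc1]; exact hle N)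
  have hc' : φ (dg e (sgl 0)) = 0 := by rw [t.eq_re (hs 0) hsp, hc]; simp
  have := t.fin e hs (BD.const 1) N
  have h1 : (fun _ => 1 : ℕ → ℝ) * ind N = ind N := by funext n; simp
  rw [h1, hc', mul_zero] at this
  exact this

/-- comparison of diagonal operators whose entries are eventually dominated -/
theorem Tr.cmp (t : Tr I φ) (e : HilbertBasis ℕ ℂ H)
    (hind : ∀ N, dg e (ind N) ∈ I ∧ φ (dg e (ind N)) = 0) {s r : ℕ → ℝ} (hs : BD s) (hr : BD r)
    (hsI : dg e s ∈ I) (hrI : dg e r ∈ I) (a b : ℝ) (N : ℕ)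
    (h : ∀ n ≥ N, a * s n ≤ b * r n) :
    a * (φ (dg e s)).re ≤ b * (φ (dg e r)).re := by
  obtain ⟨M, hM⟩ := ((BD.const b).mul hr).add ((BD.const (-a)).mul hs)
  have b1 := (BD.const b).mul hr
  have b2 := (BD.const (-a)).mul hs
  have b3 := (BD.const M).mul (BD.ind N)
  have m1 := t.hI_smul (b : ℂ) _ hrI
  have m2 := t.hI_smul ((-a : ℝ) : ℂ) _ hsI
  have m3 := t.hI_smul (M : ℂ) _ (hind N).1
  have hp : (dg e (((fun _ => b) * r + (fun _ => -a) * s) + (fun _ => M) * ind N)).IsPositive := by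
    refine dg_pos e ((b1.add b2).add b3) fun n => ?_
    by_cases hn : n < N
    · have := neg_le_of_abs_le (hM n)
      simp only [Pi.add_apply, Pi.mul_apply, ind, hn, if_true] at this ⊢
      linarith
    · have := h n (not_lt.1 hn)
      simp only [Pi.add_apply, Pi.mul_apply, ind, hn, if_false]
      linarith
  rw [dg_add e (b1.add b2) b3, dg_add e b1 b2, dg_smul e hr, dg_smul e hs,
    dg_smul e (BD.ind N)] at hp
  have h1 := t.re_nonneg (t.hI_add _ _ (t.hI_add _ _ m1 m2) m3) hp
  rw [t.hφ_add _ _ (t.hI_add _ _ m1 m2) m3, t.hφ_add _ _ m1 m2, t.hφ_smul _ _ hrI,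
    t.hφ_smul _ _ hsI, t.hφ_smul _ _ (hind N).1, (hind N).2, mul_zero, add_zero, Complex.add_re,
    Complex.re_ofReal_mul, Complex.re_ofReal_mul] at h1
  linarith

theorem Tr.main (t : Tr I φ) (e : HilbertBasis ℕ ℂ H)
    (hI_notL1 : ∃ T ∈ I, ¬ Summable (fun n => sv T n))
    (S T : H →L[ℂ] H) (hS : S ∈ I) (hT : T ∈ I)
    (hSpos : S.IsPositive) (hTpos : T.IsPositive)
    (hequiv : (fun n => sv S n - sv T n) =o[atTop] fun n => sv T n) :
    φ S = φ T := by
  by_cases hsm : ∀ A ∈ I, ∀ ε > 0, ∃ n, sv A n < ε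
  · obtain ⟨T0, hT0, hns⟩ := hI_notL1
    obtain ⟨d, hd, hpos, hdns, hdI⟩ := t.exists_diag e hsm hT0 hns
    have hind := t.ind_zero e hd hpos hdns hdI
    obtain ⟨-, hs, U, hU, hSU⟩ := spectral e S hSpos (hsm S hS)
    obtain ⟨-, hr, V, hV, hTV⟩ := spectral e T hTpos (hsm T hT)
    obtain ⟨hsI, hSφ⟩ := t.conj_eq hS hU hSU
    obtain ⟨hrI, hTφ⟩ := t.conj_eq hT hV hTV
    have hT0 := t.re_nonneg hT hTpos
    have key : ∀ ε > 0, |(φ S).re - (φ T).re| ≤ ε * (φ T).re := by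
      intro ε hε
      obtain ⟨N, hN⟩ := eventually_atTop.1 (hequiv.def hε)
      have hN' : ∀ n ≥ N, |sv S n - sv T n| ≤ ε * sv T n := by
        intro n hn
        have := hN n hn
        rwa [Real.norm_eq_abs, Real.norm_eq_abs, abs_of_nonneg (sv_nonneg T n)] at this
      have c1 := t.cmp e hind hs hr hsI hrI 1 (1 + ε) N fun n hn => by
        have := abs_le.1 (hN' n hn)
        linarith
      have c2 := t.cmp e hind hr hs hrI hsI (1 - ε) 1 N fun n hn => by
        have := abs_le.1 (hN' n hn)
        linarith
      rw [← hSφ, ← hTφ] at c1 c2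
      rw [abs_le]
      constructor <;> linarith
    have hre : (φ S).re = (φ T).re := by
      by_contra hne
      have h1 : 0 < |(φ S).re - (φ T).re| := abs_pos.2 (sub_ne_zero.2 hne)
      have h2 := key (|(φ S).re - (φ T).re| / (2 * ((φ T).re + 1))) (by positivity)
      rw [div_mul_eq_mul_div, le_div_iff₀ (by positivity)] at h2
      nlinarith
    rw [t.eq_re hS hSpos, t.eq_re hT hTpos, hre]
  · push Not at hsm
    obtain ⟨A, hA, ε, hε, h⟩ := hsm
    obtain ⟨B, C, hBC⟩ := noncompact_factor e A hε h
    have h1 : (1 : H →L[ℂ] H) ∈ I := by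
      rw [← hBC]; exact t.hI_left _ _ (t.hI_right _ _ hA)
    rw [t.zero_of_one e h1 hSpos hS, t.zero_of_one e h1 hTpos hT]

end PT

/-- if `I ⊄ L₁` and `φ` is a positive trace on the ideal `I`, then `φ`
takes equal values on positive operators with equivalent singular value sequences. -/
theorem statement2
    {H : Type*} [NormedAddCommGroup H] [InnerProductSpace ℂ H] [CompleteSpace H]
    (e : HilbertBasis ℕ ℂ H)
    (I : Set (H →L[ℂ] H))
    -- `I` is a two-sided ideal of the bounded operators
    (hI_add : ∀ S T : H →L[ℂ] H, S ∈ I → T ∈ I → S + T ∈ I)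
    (hI_smul : ∀ (c : ℂ) (T : H →L[ℂ] H), T ∈ I → c • T ∈ I)
    (hI_left : ∀ (S T : H →L[ℂ] H), T ∈ I → S ∘L T ∈ I)
    (hI_right : ∀ (S T : H →L[ℂ] H), T ∈ I → T ∘L S ∈ I)
    -- `I` is not contained in the trace class `L₁`
    (hI_notL1 : ∃ T ∈ I, ¬ Summable (fun n => sv T n))
    -- `φ` is a positive trace on `I`
    (φ : (H →L[ℂ] H) → ℂ)
    (hφ_add : ∀ S T : H →L[ℂ] H, S ∈ I → T ∈ I → φ (S + T) = φ S + φ T)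
    (hφ_smul : ∀ (c : ℂ) (T : H →L[ℂ] H), T ∈ I → φ (c • T) = c * φ T)
    (hφ_tr : ∀ (T S : H →L[ℂ] H), T ∈ I → φ (S ∘L T) = φ (T ∘L S))
    (hφ_pos : ∀ T : H →L[ℂ] H, T ∈ I → T.IsPositive → ∃ r : ℝ, 0 ≤ r ∧ φ T = (r : ℂ))
    (S T : H →L[ℂ] H) (hS : S ∈ I) (hT : T ∈ I)
    (hSpos : S.IsPositive) (hTpos : T.IsPositive)
    -- `μ(n,S) = μ(n,T) + o(μ(n,T))` as `n → ∞`
    (hequiv : (fun n => sv S n - sv T n) =o[atTop] fun n => sv T n) :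
    φ S = φ T := by
  exact PT.Tr.main ⟨hI_add, hI_smul, hI_left, hI_right, hφ_add, hφ_smul, hφ_tr, hφ_pos⟩ e hI_notL1 S T hS hT hSpos hTpos hequiv
end
end

section
/- Let G ∈ Ω. Then L_G ⊆ Z_G ⊆ M_G, i.e. every compact operator T with ess sup_{t>0} ‖T‖_{1+1/t}/G(e^t) < ∞ satisfies limsup_{t→∞} Tr(|T|^{1+1/t})/G(e^t) < ∞, and every compact operator with the latter property satisfies sup_{n≥0} (1/G(n+1)) ∑_{k=0}^n μ(k,T) < ∞. -/
open MeasureTheory Filter Topology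
open scoped ENNReal

noncomputable section

variable {H : Type*} [NormedAddCommGroup H] [InnerProductSpace ℂ H] [CompleteSpace H]

/-- The class `Ω`: increasing concave functions `G : [0,∞) → [0,∞)` diverging at `+∞`,
with `G(t) = O(t)` as `t → 0+` and `G(2t)/G(t) → 1`. -/
structure MemOmega (G : ℝ → ℝ) : Prop where
  nonneg : ∀ t : ℝ, 0 ≤ t → 0 ≤ G t
  mono : MonotoneOn G (Set.Ici 0)
  concave : ConcaveOn ℝ (Set.Ici 0) G
  to_top : Tendsto G atTop atTop
  bigO_zero : (fun t => G t) =O[nhdsWithin 0 (Set.Ioi (0:ℝ))] fun t => t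
  doubling : Tendsto (fun t => G (2 * t) / G t) atTop (nhds 1)

/-- `∑_n μ(n,T)^p` as an extended real (so that divergence is meaningful). -/
def zsum (T : H →L[ℂ] H) (p : ℝ) : ℝ≥0∞ := ∑' n : ℕ, ENNReal.ofReal (sv T n ^ p)

/-- Membership in `L_G`: `ess sup_{t>0} ‖T‖_{1+1/t} / G(e^t) < ∞`. -/
def MemLG (G : ℝ → ℝ) (T : H →L[ℂ] H) : Prop :=
  ∃ C : ℝ, ∀ᵐ t ∂(volume.restrict (Set.Ioi (0:ℝ))),
    (zsum T (1 + 1 / t)) ^ (1 / (1 + 1 / t)) ≤ ENNReal.ofReal (C * G (Real.exp t))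

/-- Membership in `Z_G`: `limsup_{t→∞} Tr(|T|^{1+1/t}) / G(e^t) < ∞`. -/
def MemZG (G : ℝ → ℝ) (T : H →L[ℂ] H) : Prop :=
  ∃ C : ℝ, ∀ᶠ t : ℝ in atTop, zsum T (1 + 1 / t) ≤ ENNReal.ofReal (C * G (Real.exp t))

/-- Membership in the Lorentz ideal `M_G`: `sup_n (1/G(n+1)) ∑_{k=0}^n μ(k,T) < ∞`. -/
def MemMG (G : ℝ → ℝ) (T : H →L[ℂ] H) : Prop :=
  ∃ C : ℝ, ∀ n : ℕ, (∑ k ∈ Finset.range (n + 1), sv T k) ≤ C * G ((n : ℝ) + 1)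

theorem sv_set_bdd {H : Type*} [NormedAddCommGroup H] [InnerProductSpace ℂ H] [CompleteSpace H]
    (T : H →L[ℂ] H) (n : ℕ) : 0 ≤ sv T n ∧ sv T n ≤ ‖T‖ := by
  unfold sv
  constructor
  · apply Real.sInf_nonneg
    rintro r ⟨F, -, rfl⟩
    exact norm_nonneg _
  · apply csInf_le
    · refine ⟨0, ?_⟩
      rintro r ⟨F, -, rfl⟩
      exact norm_nonneg _
    · refine ⟨0, ?_, by simp⟩
      have : LinearMap.rank ((0 : H →L[ℂ] H) : H →ₗ[ℂ] H) = 0 := by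
        simp
      rw [this]
      exact zero_le

theorem omega_scale {G : ℝ → ℝ} (hG : MemOmega G) (l x : ℝ) (hl : 1 ≤ l) (hx : 0 ≤ x) :
    G (l * x) ≤ l * G x := by
  have hl0 : 0 < l := by linarith
  have hll : 0 ≤ 1 - 1 / l := by
    have : 1 / l ≤ 1 := by rw [div_le_one hl0]; exact hl
    linarith
  have hm0 : (0:ℝ) ∈ Set.Ici (0:ℝ) := by simp
  have hm1 : l * x ∈ Set.Ici (0:ℝ) := by simp only [Set.mem_Ici]; positivity
  have hl1 : 0 ≤ 1 / l := by positivity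
  have h := hG.concave.2 hm0 hm1 hll hl1 (by ring)
  have e1 : (1 - 1 / l) • (0:ℝ) + (1 / l) • (l * x) = x := by
    simp only [smul_eq_mul]; field_simp; ring
  rw [e1] at h
  simp only [smul_eq_mul] at h
  have h0 := hG.nonneg 0 le_rfl
  have h1 : 0 ≤ (1 - 1 / l) * G 0 := by
    apply mul_nonneg _ h0
    have : 1 / l ≤ 1 := by rw [div_le_one hl0]; exact hl
    linarith
  have h2 : 1 / l * G (l * x) ≤ G x := by linarith
  have h3 := mul_le_mul_of_nonneg_left h2 hl0.le
  have : l * (1 / l * G (l * x)) = G (l * x) := by field_simp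
  linarith

theorem omega_one_pos {G : ℝ → ℝ} (hG : MemOmega G) : 0 < G 1 := by
  obtain ⟨x, hx1, hx⟩ := ((eventually_ge_atTop 1).and (hG.to_top.eventually_gt_atTop 0)).exists
  have := omega_scale hG x 1 hx1 zero_le_one
  rw [mul_one] at this
  by_contra hn
  have : x * G 1 ≤ 0 := mul_nonpos_of_nonneg_of_nonpos (by linarith) (by linarith)
  linarith

theorem zsum_compare {H : Type*} [NormedAddCommGroup H] [InnerProductSpace ℂ H] [CompleteSpace H]
    (T : H →L[ℂ] H) (M p q : ℝ) (hM : 1 ≤ M) (hT : ‖T‖ ≤ M) (hq : 1 ≤ q) (hpq : q ≤ p)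
    (hp : p ≤ q + 1) : zsum T p ≤ ENNReal.ofReal M * zsum T q := by
  unfold zsum
  rw [← ENNReal.tsum_mul_left]
  apply ENNReal.tsum_le_tsum
  intro n
  rw [← ENNReal.ofReal_mul (by linarith)]
  apply ENNReal.ofReal_le_ofReal
  obtain ⟨h0, h1⟩ := sv_set_bdd T n
  have e : sv T n ^ p = sv T n ^ (p - q) * sv T n ^ q := by
    rw [← Real.rpow_add_of_nonneg h0 (by linarith) (by linarith)]
    congr 1; ring
  rw [e]
  apply mul_le_mul_of_nonneg_right _ (Real.rpow_nonneg h0 _)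
  calc sv T n ^ (p - q) ≤ M ^ (p - q) := Real.rpow_le_rpow h0 (h1.trans hT) (by linarith)
    _ ≤ M ^ (1:ℝ) := Real.rpow_le_rpow_of_exponent_le hM (by linarith)
    _ = M := Real.rpow_one M

theorem LG_ZG {H : Type*} [NormedAddCommGroup H] [InnerProductSpace ℂ H] [CompleteSpace H]
    (G : ℝ → ℝ) (hG : MemOmega G) (T : H →L[ℂ] H) (h : MemLG G T) : MemZG G T := by
  obtain ⟨C, hC⟩ := h
  rw [ae_restrict_iff' measurableSet_Ioi] at hC
  set C1 := max C 1
  have hC1 : 1 ≤ C1 := le_max_right _ _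
  set M := max ‖T‖ 1
  have hM : 1 ≤ M := le_max_right _ _
  set D := max (C1 * G 1) 1
  have hD : 1 ≤ D := le_max_right _ _
  refine ⟨M * (C1 * 2 * (D * Real.exp 1)), ?_⟩
  filter_upwards [eventually_ge_atTop 1] with t ht
  have hlog : 0 < Real.log 2 := Real.log_pos (by norm_num)
  obtain ⟨s, hs1, hs⟩ : ∃ s, s ∈ Set.Ioo t (t + Real.log 2) ∧
      (s ∈ Set.Ioi (0:ℝ) → (zsum T (1 + 1 / s)) ^ (1 / (1 + 1 / s)) ≤ ENNReal.ofReal (C * G (Real.exp s))) := by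
    have hd := MeasureTheory.Measure.dense_of_ae hC
    obtain ⟨s, h1, h2⟩ := hd.exists_mem_open isOpen_Ioo
      (Set.nonempty_Ioo.2 (show t < t + Real.log 2 by linarith))
    exact ⟨s, h2, h1⟩
  have hs0 : 0 < s := by linarith [hs1.1]
  have hsl : 1 ≤ s := by linarith [hs1.1]
  specialize hs hs0
  have hGs : 0 ≤ G (Real.exp s) := hG.nonneg _ (Real.exp_pos _).le
  have hGt : 0 ≤ G (Real.exp t) := hG.nonneg _ (Real.exp_pos _).le
  have hs' : (zsum T (1 + 1 / s)) ^ (1 / (1 + 1 / s)) ≤ ENNReal.ofReal (C1 * G (Real.exp s)) :=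
    hs.trans (ENNReal.ofReal_le_ofReal (mul_le_mul_of_nonneg_right (le_max_left _ _) hGs))
  have hps : 0 < 1 + 1 / s := by positivity
  rw [one_div (1 + 1 / s), ENNReal.rpow_inv_le_iff hps,
    ENNReal.ofReal_rpow_of_nonneg (by positivity) hps.le] at hs'
  have hst : 1 / s ≤ 1 / t := one_div_le_one_div_of_le (by linarith) hs1.1.le
  have ht1 : 1 / t ≤ 1 := by rw [div_le_one (by linarith)]; exact ht
  have hs01 : 0 ≤ 1 / s := by positivity
  have h1 := zsum_compare T M (1 + 1 / t) (1 + 1 / s) hM (le_max_left _ _) (by linarith)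
    (by linarith) (by linarith)
  refine h1.trans ((mul_le_mul_right hs' _).trans ?_)
  rw [← ENNReal.ofReal_mul (by linarith)]
  apply ENNReal.ofReal_le_ofReal
  rw [mul_assoc M]
  apply mul_le_mul_of_nonneg_left _ (by linarith)
  have hX : 0 ≤ C1 * G (Real.exp s) := by positivity
  rw [Real.rpow_add_of_nonneg hX (by norm_num) hs01, Real.rpow_one]
  have hb1 : C1 * G (Real.exp s) ≤ C1 * 2 * G (Real.exp t) := by
    rw [mul_assoc]
    apply mul_le_mul_of_nonneg_left _ (by linarith)
    refine le_trans (hG.mono (Real.exp_pos _).le ?_ ?_)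
      (omega_scale hG 2 (Real.exp t) (by norm_num) (Real.exp_pos _).le)
    · simp only [Set.mem_Ici]; positivity
    · calc Real.exp s ≤ Real.exp (t + Real.log 2) := Real.exp_le_exp.2 hs1.2.le
        _ = 2 * Real.exp t := by
          rw [Real.exp_add, Real.exp_log (by norm_num)]; ring
  have hb2 : (C1 * G (Real.exp s)) ^ (1 / s) ≤ D * Real.exp 1 := by
    have a1 : C1 * G (Real.exp s) ≤ D * Real.exp s := by
      have := omega_scale hG (Real.exp s) 1 (Real.one_le_exp hs0.le) zero_le_one
      rw [mul_one] at this
      calc C1 * G (Real.exp s) ≤ C1 * (Real.exp s * G 1) :=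
            mul_le_mul_of_nonneg_left this (by linarith)
        _ = (C1 * G 1) * Real.exp s := by ring
        _ ≤ _ := mul_le_mul_of_nonneg_right (le_max_left _ _) (Real.exp_pos _).le
    refine (Real.rpow_le_rpow hX a1 hs01).trans ?_
    rw [Real.mul_rpow (by linarith) (Real.exp_pos _).le, ← Real.exp_mul,
      mul_one_div_cancel hs0.ne']
    apply mul_le_mul_of_nonneg_right _ (Real.exp_pos _).le
    calc D ^ (1 / s) ≤ D ^ (1:ℝ) := Real.rpow_le_rpow_of_exponent_le hD (by linarith)
      _ = D := Real.rpow_one D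
  calc _ ≤ (C1 * 2 * G (Real.exp t)) * (D * Real.exp 1) :=
        mul_le_mul hb1 hb2 (Real.rpow_nonneg hX _) (by positivity)
    _ = _ := by ring

theorem ZG_MG {H : Type*} [NormedAddCommGroup H] [InnerProductSpace ℂ H] [CompleteSpace H]
    (G : ℝ → ℝ) (hG : MemOmega G) (T : H →L[ℂ] H) (h : MemZG G T) : MemMG G T := by
  obtain ⟨C, hC⟩ := h
  have hG1 := omega_one_pos hG
  have hcast : Tendsto (fun n : ℕ => Real.log ((n:ℝ) + 1)) atTop atTop :=
    Real.tendsto_log_atTop.comp (tendsto_atTop_add_const_right _ _ tendsto_natCast_atTop_atTop)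
  obtain ⟨N, hN⟩ := eventually_atTop.1 ((hcast.eventually hC).and
    (hcast.eventually_ge_atTop 1))
  set C1 := max C 0
  have hC1 : 0 ≤ C1 := le_max_right _ _
  have hT := norm_nonneg T
  refine ⟨(N + 1) * ‖T‖ / G 1 + (1 / G 1 + Real.exp 1 * C1), fun n => ?_⟩
  have hGn : G 1 ≤ G ((n:ℝ) + 1) :=
    hG.mono (by simp) (by simp only [Set.mem_Ici]; positivity) (by simp)
  have hE := Real.exp_pos 1
  have hA : ∀ a : ℝ, 0 ≤ a → a ≤ a / G 1 * G ((n:ℝ) + 1) := by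
    intro a ha
    calc a = a / G 1 * G 1 := by field_simp
      _ ≤ _ := mul_le_mul_of_nonneg_left hGn (by positivity)
  have hGn0 : 0 ≤ G ((n:ℝ) + 1) := by linarith
  rw [add_mul]
  rcases lt_or_ge n N with hn | hn
  · have h1 : ∑ k ∈ Finset.range (n + 1), sv T k ≤ (N + 1) * ‖T‖ := by
      calc ∑ k ∈ Finset.range (n + 1), sv T k ≤ ∑ k ∈ Finset.range (n + 1), ‖T‖ :=
            Finset.sum_le_sum fun k _ => (sv_set_bdd T k).2
        _ = ((n:ℝ) + 1) * ‖T‖ := by simp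
        _ ≤ _ := by
          have : (n:ℝ) ≤ N := by exact_mod_cast hn.le
          gcongr
    have h2 := hA ((N + 1) * ‖T‖) (by positivity)
    have h3 : 0 ≤ (1 / G 1 + Real.exp 1 * C1) * G ((n:ℝ) + 1) := by positivity
    linarith
  · obtain ⟨hz, ht⟩ := hN n hn
    have hn1 : (0:ℝ) < (n:ℝ) + 1 := by positivity
    rw [Real.exp_log hn1] at hz
    set t := Real.log ((n:ℝ) + 1) with ht_def
    have ht0 : 0 < t := by linarith
    have hz1 : zsum T (1 + 1 / t) ≤ ENNReal.ofReal (C1 * G ((n:ℝ) + 1)) :=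
      hz.trans (ENNReal.ofReal_le_ofReal (mul_le_mul_of_nonneg_right (le_max_left _ _) hGn0))
    have hfin : ∑ k ∈ Finset.range (n + 1), sv T k ^ (1 + 1 / t) ≤ C1 * G ((n:ℝ) + 1) := by
      have h4 := (ENNReal.sum_le_tsum (f := fun k => ENNReal.ofReal (sv T k ^ (1 + 1 / t)))
        (Finset.range (n + 1))).trans hz1
      rw [← ENNReal.ofReal_sum_of_nonneg
        (fun k _ => Real.rpow_nonneg (sv_set_bdd T k).1 _)] at h4
      exact (ENNReal.ofReal_le_ofReal_iff (by positivity)).1 h4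
    have hpt : ∀ k, sv T k ≤ 1 / ((n:ℝ) + 1) + Real.exp 1 * sv T k ^ (1 + 1 / t) := by
      intro k
      obtain ⟨h0, -⟩ := sv_set_bdd T k
      have hr := Real.rpow_nonneg h0 (1 + 1 / t)
      rcases le_or_gt (sv T k) (1 / ((n:ℝ) + 1)) with hk | hk
      · have : 0 ≤ Real.exp 1 * sv T k ^ (1 + 1 / t) := by positivity
        linarith
      · have hk0 : 0 < sv T k := lt_trans (by positivity) hk
        have h5 : Real.exp (-1) ≤ sv T k ^ (1 / t) := by
          have : (1 / ((n:ℝ) + 1)) ^ (1 / t) = Real.exp (-1) := by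
            rw [Real.rpow_def_of_pos (by positivity), one_div ((n:ℝ) + 1), Real.log_inv,
              ← ht_def]
            congr 1; field_simp
          rw [← this]
          exact Real.rpow_le_rpow (by positivity) hk.le (by positivity)
        have h6 : sv T k ≤ Real.exp 1 * sv T k ^ (1 + 1 / t) := by
          rw [Real.rpow_add hk0, Real.rpow_one]
          calc sv T k = Real.exp 1 * (sv T k * Real.exp (-1)) := by
                rw [Real.exp_neg]; field_simp
            _ ≤ _ := by gcongr
        have : 0 < 1 / ((n:ℝ) + 1) := by positivity
        linarith
    have hsum : ∑ k ∈ Finset.range (n + 1), sv T k ≤ 1 + Real.exp 1 * (C1 * G ((n:ℝ) + 1)) := by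
      calc ∑ k ∈ Finset.range (n + 1), sv T k
          ≤ ∑ k ∈ Finset.range (n + 1), (1 / ((n:ℝ) + 1) + Real.exp 1 * sv T k ^ (1 + 1 / t)) :=
            Finset.sum_le_sum fun k _ => hpt k
        _ = 1 + Real.exp 1 * ∑ k ∈ Finset.range (n + 1), sv T k ^ (1 + 1 / t) := by
          rw [Finset.sum_add_distrib, ← Finset.mul_sum]
          congr 1
          simp
          field_simp
        _ ≤ _ := by gcongr
    have h7 := hA 1 zero_le_one
    have h8 : 0 ≤ (N + 1) * ‖T‖ / G 1 * G ((n:ℝ) + 1) := by positivity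
    have h9 : (1 / G 1 + Real.exp 1 * C1) * G ((n:ℝ) + 1) =
      1 / G 1 * G ((n:ℝ) + 1) + Real.exp 1 * (C1 * G ((n:ℝ) + 1)) := by ring
    linarith

/-- for `G ∈ Ω` one has the inclusions `L_G ⊆ Z_G ⊆ M_G`. -/
theorem statement5
    {H : Type*} [NormedAddCommGroup H] [InnerProductSpace ℂ H] [CompleteSpace H]
    (e : HilbertBasis ℕ ℂ H)
    (G : ℝ → ℝ) (hG : MemOmega G) :
    (∀ T : H →L[ℂ] H, IsCompactOperator ⇑T → MemLG G T → MemZG G T) ∧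
    (∀ T : H →L[ℂ] H, IsCompactOperator ⇑T → MemZG G T → MemMG G T) := by
  exact ⟨fun T _ h => LG_ZG G hG T h, fun T _ h => ZG_MG G hG T h⟩
end
end

section
/- Let G ∈ Ω satisfy lim_{t→∞} G(t^λ)/G(t) = λ^α for every λ > 0, with α ≥ 0, and let 0 ≤ T ∈ M_G. If for some constant c > 0 one has lim_{n→∞} (1/G(n+1)) ∑_{k=0}^n μ(k,T) = c, then lim_{t→∞} (1/G(e^t)) Tr(T^{1+1/t}) = c·Γ(α+1), where Γ is the Gamma function. -/
open MeasureTheory Filter Topology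
open scoped ENNReal

noncomputable section

variable {H : Type*} [NormedAddCommGroup H] [InnerProductSpace ℂ H] [CompleteSpace H]

lemma aux_sv_nonneg {H : Type*} [NormedAddCommGroup H] [InnerProductSpace ℂ H]
    [CompleteSpace H] (T : H →L[ℂ] H) (n : ℕ) : 0 ≤ sv T n := by
  apply Real.sInf_nonneg
  rintro r ⟨F, _, rfl⟩
  exact norm_nonneg _

lemma aux_sv_anti {H : Type*} [NormedAddCommGroup H] [InnerProductSpace ℂ H]
    [CompleteSpace H] (T : H →L[ℂ] H) : Antitone (sv T) := by
  intro m n hmn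
  apply csInf_le_csInf
  · refine ⟨0, ?_⟩
    rintro r ⟨F, _, rfl⟩
    exact norm_nonneg _
  · refine ⟨‖T - 0‖, 0, ?_, rfl⟩
    simp
  · rintro r ⟨F, hF, rfl⟩
    exact ⟨F, hF.trans (by exact_mod_cast hmn), rfl⟩

lemma aux_potter (G : ℝ → ℝ) (hG : MemOmega G) (α : ℝ)
    (hrv : ∀ l : ℝ, 0 < l → Tendsto (fun t : ℝ => G (t ^ l) / G t) atTop (nhds (l ^ α))) :
    ∃ m : ℕ, ∃ u0 : ℝ, 1 ≤ u0 ∧ ∀ u, u0 ≤ u → 0 < G (Real.exp u) ∧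
      ∀ v, 0 ≤ v → G (Real.exp (v * u)) ≤ (1 + (2 * v) ^ m) * G (Real.exp u) := by
  obtain ⟨m, hm⟩ := exists_nat_gt α
  have hlt : (2:ℝ) ^ α < 2 ^ m := by
    rw [← Real.rpow_natCast]
    exact Real.rpow_lt_rpow_of_exponent_lt (by norm_num) hm
  have h1 : ∀ᶠ u : ℝ in atTop, G ((Real.exp u) ^ (2:ℝ)) / G (Real.exp u) < 2 ^ m :=
    ((hrv 2 (by norm_num)).comp Real.tendsto_exp_atTop).eventually_lt_const hlt
  have h2 : ∀ᶠ u : ℝ in atTop, 0 < G (Real.exp u) :=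
    (hG.to_top.comp Real.tendsto_exp_atTop).eventually_gt_atTop 0
  obtain ⟨u1, hu1⟩ := eventually_atTop.1 (h1.and h2)
  refine ⟨m, max u1 1, le_max_right _ _, ?_⟩
  intro u hu
  have hu0 : 1 ≤ u := (le_max_right _ _).trans hu
  have huu : u1 ≤ u := (le_max_left _ _).trans hu
  have hpos := (hu1 u huu).2
  refine ⟨hpos, ?_⟩
  have hk : ∀ k : ℕ, G (Real.exp (2 ^ k * u)) ≤ (2 ^ m) ^ k * G (Real.exp u) := by
    intro k
    induction k with
    | zero => simp
    | succ k ih =>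
      have h1k : (1:ℝ) ≤ 2 ^ k := one_le_pow₀ (by norm_num)
      obtain ⟨ha, hb⟩ := hu1 (2 ^ k * u) (by nlinarith)
      rw [div_lt_iff₀ hb, ← Real.exp_mul] at ha
      have : (2:ℝ) ^ (k+1) * u = 2 ^ k * u * 2 := by ring
      rw [this]
      calc _ ≤ _ := ha.le
        _ ≤ 2 ^ m * ((2 ^ m) ^ k * G (Real.exp u)) := by gcongr
        _ = _ := by ring
  intro v hv
  rcases le_total v 1 with h | h
  · have : G (Real.exp (v * u)) ≤ G (Real.exp u) :=
      hG.mono (Real.exp_pos _).le (Real.exp_pos _).le (Real.exp_le_exp.2 (by nlinarith))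
    have h3 : 0 ≤ (2 * v) ^ m := by positivity
    nlinarith
  · obtain ⟨k, hk1, hk2⟩ := exists_nat_pow_near h (by norm_num : (1:ℝ) < 2)
    have h3 : G (Real.exp (v * u)) ≤ G (Real.exp (2 ^ (k+1) * u)) :=
      hG.mono (Real.exp_pos _).le (Real.exp_pos _).le
        (Real.exp_le_exp.2 (by nlinarith))
    have h4 : ((2:ℝ) ^ m) ^ (k+1) ≤ (2 * v) ^ m := by
      rw [← pow_mul, mul_comm, pow_mul]
      apply pow_le_pow_left₀ (by positivity)
      rw [pow_succ]; linarith
    calc _ ≤ _ := h3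
      _ ≤ _ := hk (k+1)
      _ ≤ _ := by gcongr; linarith

/-- partial sums up to exp u -/
def auxA (x : ℕ → ℝ) (u : ℝ) : ℝ := ∑ k ∈ Finset.range ⌊Real.exp u⌋₊, x k

lemma auxA_meas (x : ℕ → ℝ) : Measurable (auxA x) := by
  have : Measurable (fun N : ℕ => ∑ k ∈ Finset.range N, x k) := measurable_from_top
  exact this.comp (Nat.measurable_floor.comp Real.measurable_exp)

lemma auxA_nonneg (x : ℕ → ℝ) (hx : ∀ n, 0 ≤ x n) (u : ℝ) : 0 ≤ auxA x u :=
  Finset.sum_nonneg fun i _ => hx i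

lemma auxA_lim (G : ℝ → ℝ) (hG : MemOmega G) (x : ℕ → ℝ) (c : ℝ)
    (hlim : Tendsto (fun n : ℕ => (∑ k ∈ Finset.range (n + 1), x k) / G ((n : ℝ) + 1))
      atTop (nhds c)) :
    Tendsto (fun u => auxA x u / G (Real.exp u)) atTop (nhds c) := by
  have h0 : Tendsto (fun n : ℕ => (∑ k ∈ Finset.range n, x k) / G (n : ℝ)) atTop (nhds c) := by
    rw [← tendsto_add_atTop_iff_nat 1]
    simpa using hlim
  have hN : Tendsto (fun u : ℝ => ⌊Real.exp u⌋₊) atTop atTop :=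
    tendsto_nat_floor_atTop.comp Real.tendsto_exp_atTop
  have hN' : Tendsto (fun u : ℝ => (⌊Real.exp u⌋₊ : ℝ)) atTop atTop :=
    tendsto_natCast_atTop_atTop.comp hN
  have h1 := h0.comp hN
  have hGN : ∀ᶠ u : ℝ in atTop, 0 < G (⌊Real.exp u⌋₊ : ℝ) :=
    (hG.to_top.comp hN').eventually_gt_atTop 0
  have hd : Tendsto (fun u : ℝ => (G (2 * (⌊Real.exp u⌋₊ : ℝ)) / G (⌊Real.exp u⌋₊ : ℝ))⁻¹)
      atTop (nhds 1) := by
    simpa using (hG.doubling.comp hN').inv₀ (by norm_num)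
  have h2 : Tendsto (fun u : ℝ => G (⌊Real.exp u⌋₊ : ℝ) / G (Real.exp u)) atTop (nhds 1) := by
    refine tendsto_of_tendsto_of_tendsto_of_le_of_le' hd tendsto_const_nhds ?_ ?_
    · filter_upwards [hGN, eventually_ge_atTop 0] with u hu hu0
      have he : 1 ≤ Real.exp u := Real.one_le_exp hu0
      have hf : (1:ℝ) ≤ ⌊Real.exp u⌋₊ := by
        exact_mod_cast (Nat.one_le_floor_iff _).2 he
      have hlt := Nat.lt_floor_add_one (Real.exp u)
      have hle := Nat.floor_le (Real.exp_pos u).le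
      have hg1 : G (⌊Real.exp u⌋₊ : ℝ) ≤ G (Real.exp u) :=
        hG.mono (Set.mem_Ici.2 (Nat.cast_nonneg _)) (Real.exp_pos _).le hle
      rw [inv_div]
      apply div_le_div_of_nonneg_left hu.le (by linarith)
      exact hG.mono (Real.exp_pos _).le (by simp) (by linarith)
    · filter_upwards [hGN] with u hu
      have hle := Nat.floor_le (Real.exp_pos u).le
      have hg1 : G (⌊Real.exp u⌋₊ : ℝ) ≤ G (Real.exp u) :=
        hG.mono (Set.mem_Ici.2 (Nat.cast_nonneg _)) (Real.exp_pos _).le hle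
      exact (div_le_one (by linarith)).2 hg1
  have h3 := h1.mul h2
  rw [mul_one] at h3
  refine h3.congr' ?_
  filter_upwards [hGN] with u hu
  simp only [Function.comp, auxA]
  field_simp

lemma auxA_le (G : ℝ → ℝ) (hG : MemOmega G) (x : ℕ → ℝ) (C : ℝ) (hC : 0 ≤ C)
    (hM : ∀ n : ℕ, (∑ k ∈ Finset.range (n + 1), x k) ≤ C * G ((n : ℝ) + 1))
    (u : ℝ) (hu : 0 ≤ u) : auxA x u ≤ C * G (Real.exp u) := by
  have he : 1 ≤ Real.exp u := Real.one_le_exp hu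
  have hf : 1 ≤ ⌊Real.exp u⌋₊ := (Nat.one_le_floor_iff _).2 he
  obtain ⟨n, hn⟩ : ∃ n, ⌊Real.exp u⌋₊ = n + 1 := ⟨_, (Nat.sub_add_cancel hf).symm⟩
  have hle := Nat.floor_le (Real.exp_pos u).le
  unfold auxA
  rw [hn] at hle ⊢
  push_cast at hle
  refine (hM n).trans ?_
  gcongr
  exact hG.mono (by simp; positivity) (Real.exp_pos _).le hle

lemma aux_bound_int (m : ℕ) :
    Integrable (fun v : ℝ => (1 + (2 * v) ^ m) * Real.exp (-v)) (volume.restrict (Set.Ioi 0)) := by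
  have h1 := Real.GammaIntegral_convergent (s := 1) (by norm_num)
  have h2 := Real.GammaIntegral_convergent (s := (m:ℝ) + 1) (by positivity)
  have h3 := (h1.add (h2.const_mul (2 ^ m)))
  refine h3.congr ?_
  filter_upwards with v
  simp [mul_pow]
  ring

lemma aux_hasSum (x : ℕ → ℝ) (hx : ∀ n, 0 ≤ x n) (t : ℝ) (ht : 0 < t)
    (hint : Integrable (fun v : ℝ => auxA x (v * t) * Real.exp (-v))
      (volume.restrict (Set.Ioi 0))) :
    HasSum (fun n : ℕ => x n * ((n:ℝ) + 1) ^ (-(1 / t)))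
      (∫ v in Set.Ioi (0:ℝ), auxA x (v * t) * Real.exp (-v)) := by
  let F : ℕ → ℝ → ℝ := fun n v =>
    Set.indicator (Set.Ici (Real.log (n + 1) / t)) (fun v => x n * Real.exp (-v)) v
  have hF0 : ∀ n v, 0 ≤ F n v := fun n v =>
    Set.indicator_nonneg (fun v _ => mul_nonneg (hx n) (Real.exp_pos _).le) v
  have hFs : ∀ v, HasSum (fun n => F n v) (auxA x (v * t) * Real.exp (-v)) := by
    intro v
    have key : ∀ n : ℕ, F n v = if n ∈ Finset.range ⌊Real.exp (v * t)⌋₊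
        then x n * Real.exp (-v) else 0 := by
      intro n
      simp only [F, Set.indicator, Set.mem_Ici, Finset.mem_range]
      congr 1
      rw [← Nat.succ_le_iff, Nat.le_floor_iff (Real.exp_pos _).le, div_le_iff₀ ht,
        Real.log_le_iff_le_exp (by positivity)]
      push_cast
      rfl
    have : auxA x (v * t) * Real.exp (-v)
        = ∑ n ∈ Finset.range ⌊Real.exp (v * t)⌋₊, F n v := by
      rw [auxA, Finset.sum_mul]
      refine Finset.sum_congr rfl fun n hn => ?_
      rw [key, if_pos hn]
    rw [this]
    apply hasSum_sum_of_ne_finset_zero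
    intro n hn
    rw [key, if_neg hn]
  have hFi : ∀ n, ∫ v in Set.Ioi (0:ℝ), F n v = x n * ((n:ℝ) + 1) ^ (-(1 / t)) := by
    intro n
    have ha : 0 ≤ Real.log ((n:ℝ) + 1) / t :=
      div_nonneg (Real.log_nonneg (by simp)) ht.le
    rw [← integral_Ici_eq_integral_Ioi]
    simp only [F]
    rw [setIntegral_indicator measurableSet_Ici, Set.Ici_inter_Ici, sup_eq_right.2 ha,
      integral_Ici_eq_integral_Ioi, integral_const_mul, integral_exp_neg_Ioi,
      Real.rpow_def_of_pos (by positivity)]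
    congr 2
    ring
  have := hasSum_integral_of_dominated_convergence (μ := volume.restrict (Set.Ioi (0:ℝ)))
    (F := F) (f := fun v => auxA x (v * t) * Real.exp (-v)) (bound := F) ?_ ?_ ?_ ?_ ?_
  · simpa only [hFi] using this
  · intro n
    apply Measurable.aestronglyMeasurable
    exact Measurable.indicator (by fun_prop) measurableSet_Ici
  · intro n
    filter_upwards with v
    rw [Real.norm_of_nonneg (hF0 n v)]
  · filter_upwards with v using (hFs v).summable
  · simpa only [(hFs _).tsum_eq] using hint
  · filter_upwards with v using hFs v

lemma aux_main (G : ℝ → ℝ) (hG : MemOmega G) (α : ℝ)  (hα : 0 ≤ α)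
    (hrv : ∀ l : ℝ, 0 < l → Tendsto (fun t : ℝ => G (t ^ l) / G t) atTop (nhds (l ^ α)))
    (x : ℕ → ℝ) (hx : ∀ n, 0 ≤ x n) (c : ℝ)
    (hM : ∃ C : ℝ, ∀ n : ℕ, (∑ k ∈ Finset.range (n + 1), x k) ≤ C * G ((n : ℝ) + 1))
    (hlim : Tendsto (fun n : ℕ => (∑ k ∈ Finset.range (n + 1), x k) / G ((n : ℝ) + 1))
      atTop (nhds c)) :
    (∀ᶠ t : ℝ in atTop, Summable (fun n : ℕ => x n * ((n:ℝ) + 1) ^ (-(1 / t)))) ∧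
    Tendsto (fun t : ℝ => (∑' n : ℕ, x n * ((n:ℝ) + 1) ^ (-(1 / t))) / G (Real.exp t))
      atTop (nhds (c * Real.Gamma (α + 1))) := by
  obtain ⟨C, hC0, hC⟩ : ∃ C : ℝ, 0 ≤ C ∧
      ∀ n : ℕ, (∑ k ∈ Finset.range (n + 1), x k) ≤ C * G ((n : ℝ) + 1) := by
    obtain ⟨C, hC⟩ := hM
    refine ⟨|C|, abs_nonneg _, fun n => (hC n).trans ?_⟩
    exact mul_le_mul_of_nonneg_right (le_abs_self C) (hG.nonneg _ (by positivity))
  obtain ⟨m, u0, hu0, hP⟩ := aux_potter G hG α hrv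
  have hmeas : ∀ t : ℝ, Measurable (fun v : ℝ => auxA x (v * t) * Real.exp (-v)) := by
    intro t
    exact ((auxA_meas x).comp (by fun_prop)).mul (by fun_prop)
  have hb : ∀ t, u0 ≤ t → ∀ v, 0 < v → auxA x (v * t) * Real.exp (-v) ≤
      (C * G (Real.exp t)) * ((1 + (2 * v) ^ m) * Real.exp (-v)) := by
    intro t ht v hv
    have h1 := auxA_le G hG x C hC0 hC (v * t) (by nlinarith)
    have h2 := (hP t ht).2 v hv.le
    calc _ ≤ (C * ((1 + (2 * v) ^ m) * G (Real.exp t))) * Real.exp (-v) := by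
          gcongr
          exact h1.trans (by gcongr)
      _ = _ := by ring
  have hn : ∀ t v, 0 ≤ auxA x (v * t) * Real.exp (-v) := fun t v =>
    mul_nonneg (auxA_nonneg x hx _) (Real.exp_pos _).le
  have hint : ∀ t, u0 ≤ t → Integrable (fun v : ℝ => auxA x (v * t) * Real.exp (-v))
      (volume.restrict (Set.Ioi 0)) := by
    intro t ht
    refine ((aux_bound_int m).const_mul (C * G (Real.exp t))).mono'
      (hmeas t).aestronglyMeasurable ?_
    filter_upwards [ae_restrict_mem measurableSet_Ioi] with v hv
    rw [Real.norm_of_nonneg (hn t v)]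
    exact hb t ht v hv
  have hs : ∀ t, u0 ≤ t → _ := fun t ht => aux_hasSum x hx t (by linarith) (hint t ht)
  constructor
  · filter_upwards [eventually_ge_atTop u0] with t ht using (hs t ht).summable
  have hlimA := auxA_lim G hG x c hlim
  have hlim2 : Tendsto (fun t : ℝ => ∫ v in Set.Ioi (0:ℝ),
      auxA x (v * t) * Real.exp (-v) / G (Real.exp t)) atTop
      (nhds (∫ v in Set.Ioi (0:ℝ), c * (Real.exp (-v) * v ^ (α + 1 - 1)))) := by
    refine tendsto_integral_filter_of_dominated_convergence
      (fun v => C * ((1 + (2 * v) ^ m) * Real.exp (-v))) ?_ ?_ ?_ ?_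
    · filter_upwards with t
      exact ((hmeas t).div_const _).aestronglyMeasurable
    · filter_upwards [eventually_ge_atTop u0] with t ht
      filter_upwards [ae_restrict_mem measurableSet_Ioi] with v hv
      have hp := (hP t ht).1
      rw [Real.norm_of_nonneg (div_nonneg (hn t v) hp.le), div_le_iff₀ hp]
      refine (hb t ht v hv).trans (le_of_eq ?_)
      ring
    · exact (aux_bound_int m).const_mul C
    · filter_upwards [ae_restrict_mem measurableSet_Ioi] with v hv
      have hv : 0 < v := hv
      have hvt : Tendsto (fun t : ℝ => v * t) atTop atTop := tendsto_id.const_mul_atTop hv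
      have h1 := hlimA.comp hvt
      have h2 := (hrv v hv).comp Real.tendsto_exp_atTop
      have h3 := (h1.mul h2).mul_const (Real.exp (-v))
      have he : c * (Real.exp (-v) * v ^ (α + 1 - 1)) = c * v ^ α * Real.exp (-v) := by
        rw [add_sub_cancel_right]; ring
      rw [he]
      refine h3.congr' ?_
      filter_upwards [hvt.eventually_ge_atTop u0] with t ht
      have hp := (hP _ ht).1
      simp only [Function.comp]
      rw [← Real.exp_mul, mul_comm t v]
      field_simp
  rw [integral_const_mul, ← Real.Gamma_eq_integral (by linarith)] at hlim2
  refine hlim2.congr' ?_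
  filter_upwards [eventually_ge_atTop u0] with t ht
  rw [integral_div, (hs t ht).tsum_eq]

lemma aux_seq (G : ℝ → ℝ) (hG : MemOmega G) (α : ℝ)  (hα : 0 ≤ α)
    (hrv : ∀ l : ℝ, 0 < l → Tendsto (fun t : ℝ => G (t ^ l) / G t) atTop (nhds (l ^ α)))
    (x : ℕ → ℝ) (hx : ∀ n, 0 ≤ x n) (hanti : Antitone x) (c : ℝ)
    (hM : ∃ C : ℝ, ∀ n : ℕ, (∑ k ∈ Finset.range (n + 1), x k) ≤ C * G ((n : ℝ) + 1))
    (hlim : Tendsto (fun n : ℕ => (∑ k ∈ Finset.range (n + 1), x k) / G ((n : ℝ) + 1))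
      atTop (nhds c)) :
    Tendsto (fun t : ℝ => (∑' n : ℕ, x n ^ (1 + 1 / t)) / G (Real.exp t))
      atTop (nhds (c * Real.Gamma (α + 1))) := by
  obtain ⟨hsum, hZ⟩ := aux_main G hG α hα hrv x hx c hM hlim
  set L := c * Real.Gamma (α + 1) with hL
  set Z : ℝ → ℝ := fun t => ∑' n : ℕ, x n * ((n:ℝ) + 1) ^ (-(1 / t)) with hZdef
  have hGt : Tendsto (fun t => G (Real.exp t)) atTop atTop :=
    hG.to_top.comp Real.tendsto_exp_atTop
  have hGpos : ∀ᶠ t : ℝ in atTop, 0 < G (Real.exp t) := hGt.eventually_gt_atTop 0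
  -- scaling
  have hscale : ∀ l : ℝ, 0 < l →
      Tendsto (fun t => Z (l * t) / G (Real.exp t)) atTop (nhds (L * l ^ α)) := by
    intro l hl
    have hlt : Tendsto (fun t : ℝ => l * t) atTop atTop := tendsto_id.const_mul_atTop hl
    have h1 := (hZ.comp hlt).mul ((hrv l hl).comp Real.tendsto_exp_atTop)
    refine h1.congr' ?_
    filter_upwards [hlt.eventually hGpos] with t ht
    simp only [Function.comp]
    rw [← Real.exp_mul, mul_comm t l]
    field_simp
    rfl
  -- polynomial decay of x
  have hdecay : ∀ t0 : ℝ, Summable (fun n : ℕ => x n * ((n:ℝ) + 1) ^ (-(1 / t0))) → 0 < t0 →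
      ∃ K : ℝ, 0 < K ∧ ∀ n : ℕ, x n ≤ K * ((n:ℝ) + 1) ^ (-(1 - 1 / t0)) := by
    intro t0 hs ht0
    have hnn : ∀ n : ℕ, 0 ≤ x n * ((n:ℝ) + 1) ^ (-(1 / t0)) := fun n =>
      mul_nonneg (hx n) (by positivity)
    refine ⟨Z t0 + 1, by have h : 0 ≤ Z t0 := tsum_nonneg hnn; linarith, fun N => ?_⟩
    have h1 : ((N:ℝ) + 1) * (x N * ((N:ℝ) + 1) ^ (-(1 / t0))) ≤ Z t0 := by
      have := hs.sum_le_tsum (Finset.range (N+1)) (fun i _ => hnn i)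
      refine le_trans ?_ this
      have h2 := Finset.card_nsmul_le_sum (Finset.range (N+1))
        (fun n : ℕ => x n * ((n:ℝ) + 1) ^ (-(1 / t0))) (x N * ((N:ℝ) + 1) ^ (-(1 / t0))) ?_
      · simpa using h2
      · intro n hn
        have hn' : n ≤ N := by simpa [Nat.lt_succ_iff] using hn
        have hn2 : (n:ℝ) ≤ N := by exact_mod_cast hn'
        apply mul_le_mul (hanti hn') _ (by positivity) (hx n)
        apply Real.rpow_le_rpow_of_nonpos (by positivity) (by linarith)
        have : 0 < 1 / t0 := by positivity
        linarith
    have hp : (0:ℝ) < (N:ℝ) + 1 := by positivity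
    have h3 : ((N:ℝ) + 1) * (x N * ((N:ℝ) + 1) ^ (-(1 / t0)))
        = x N * ((N:ℝ) + 1) ^ (1 - 1 / t0) := by
      rw [sub_eq_add_neg, Real.rpow_add hp, Real.rpow_one]; ring
    rw [h3] at h1
    rw [Real.rpow_neg hp.le, ← div_eq_mul_inv, le_div_iff₀ (by positivity)]
    linarith
  -- upper estimates
  have hupper : ∀ t0 : ℝ, 1 < t0 → Summable (fun n : ℕ => x n * ((n:ℝ) + 1) ^ (-(1 / t0))) →
      ∃ K : ℝ, 0 < K ∧ ∀ᶠ t : ℝ in atTop, Summable (fun n : ℕ => x n ^ (1 + 1 / t)) ∧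
        ∑' n : ℕ, x n ^ (1 + 1 / t) ≤ K ^ (1 / t) * Z ((1 - 1 / t0)⁻¹ * t) := by
    intro t0 ht0 hs
    obtain ⟨K, hK, hKx⟩ := hdecay t0 hs (by linarith)
    refine ⟨K, hK, ?_⟩
    have hd : 0 < 1 - 1 / t0 := by
      rw [sub_pos, div_lt_one (by linarith)]; exact ht0
    have hlt : Tendsto (fun t : ℝ => (1 - 1 / t0)⁻¹ * t) atTop atTop :=
      tendsto_id.const_mul_atTop (by positivity)
    filter_upwards [hlt.eventually hsum, eventually_gt_atTop 0] with t hst ht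
    have hle : ∀ n : ℕ, x n ^ (1 + 1 / t) ≤
        K ^ (1 / t) * (x n * ((n:ℝ) + 1) ^ (-(1 / ((1 - 1 / t0)⁻¹ * t)))) := by
      intro n
      have hp : (0:ℝ) < (n:ℝ) + 1 := by positivity
      have h1t : 0 < 1 / t := by positivity
      rw [Real.rpow_add_of_nonneg (hx n) (by norm_num) h1t.le, Real.rpow_one]
      have h1 : x n ^ (1 / t) ≤ (K * ((n:ℝ) + 1) ^ (-(1 - 1 / t0))) ^ (1 / t) :=
        Real.rpow_le_rpow (hx n) (hKx n) h1t.le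
      rw [Real.mul_rpow hK.le (by positivity), ← Real.rpow_mul hp.le] at h1
      have h2 : -(1 - 1 / t0) * (1 / t) = -(1 / ((1 - 1 / t0)⁻¹ * t)) := by
        rw [one_div ((1 - 1 / t0)⁻¹ * t), mul_inv, inv_inv, one_div t]; ring
      rw [h2] at h1
      calc _ ≤ _ := mul_le_mul_of_nonneg_left h1 (hx n)
        _ = _ := by ring
    have hs2 : Summable (fun n : ℕ => x n ^ (1 + 1 / t)) :=
      Summable.of_nonneg_of_le (fun n => Real.rpow_nonneg (hx n) _) hle (hst.mul_left _)
    refine ⟨hs2, ?_⟩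
    refine (hs2.tsum_le_tsum hle (hst.mul_left _)).trans (le_of_eq ?_)
    rw [tsum_mul_left]
  have hsumx : ∀ᶠ t : ℝ in atTop, Summable (fun n : ℕ => x n ^ (1 + 1 / t)) := by
    obtain ⟨t0, h1, h2⟩ := ((eventually_gt_atTop (1:ℝ)).and hsum).exists
    obtain ⟨K, _, h⟩ := hupper t0 h1 h2
    exact h.mono fun t ht => ht.1
  -- lower estimates
  have hlower : ∀ ε : ℝ, 0 < ε → ∃ B : ℝ, ∀ᶠ t : ℝ in atTop,
      Z ((1 + ε)⁻¹ * t) ≤ ∑' n : ℕ, x n ^ (1 + 1 / t) + B := by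
    intro ε hε
    have hsB : Summable (fun n : ℕ => ((n:ℝ) + 1) ^ (-(1 + ε))) := by
      have := (Real.summable_nat_rpow (p := -(1 + ε))).2 (by linarith)
      have := (summable_nat_add_iff 1).2 this
      simpa using this
    refine ⟨∑' n : ℕ, ((n:ℝ) + 1) ^ (-(1 + ε)), ?_⟩
    have hlt : Tendsto (fun t : ℝ => (1 + ε)⁻¹ * t) atTop atTop :=
      tendsto_id.const_mul_atTop (by positivity)
    filter_upwards [hlt.eventually hsum, hsumx, eventually_gt_atTop 0] with t hst hsx ht
    rw [← hsx.tsum_add hsB]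
    refine hst.tsum_le_tsum ?_ (hsx.add hsB)
    intro n
    have hp : (0:ℝ) < (n:ℝ) + 1 := by positivity
    have h1t : 0 < 1 / t := by positivity
    have h2 : -(1 / ((1 + ε)⁻¹ * t)) = -(1 + ε) * (1 / t) := by
      rw [one_div ((1 + ε)⁻¹ * t), mul_inv, inv_inv, one_div t]; ring
    rw [h2]
    rcases le_total (((n:ℝ) + 1) ^ (-(1 + ε))) (x n) with h | h
    · have h3 : ((n:ℝ) + 1) ^ (-(1 + ε) * (1 / t)) ≤ x n ^ (1 / t) := by
        rw [Real.rpow_mul hp.le]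
        exact Real.rpow_le_rpow (by positivity) h h1t.le
      rw [Real.rpow_add_of_nonneg (hx n) (by norm_num) h1t.le, Real.rpow_one]
      have h4 := mul_le_mul_of_nonneg_left h3 (hx n)
      have h5 : 0 ≤ ((n:ℝ) + 1) ^ (-(1 + ε)) := by positivity
      linarith
    · have h3 : ((n:ℝ) + 1) ^ (-(1 + ε) * (1 / t)) ≤ 1 := by
        apply Real.rpow_le_one_of_one_le_of_nonpos (by simp)
        nlinarith
      have h4 := mul_le_mul_of_nonneg_left h3 (hx n)
      have h5 : 0 ≤ x n ^ (1 + 1 / t) := Real.rpow_nonneg (hx n) _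
      linarith
  have hcont : Tendsto (fun l : ℝ => L * l ^ α) (nhds 1) (nhds L) := by
    have : ContinuousAt (fun l : ℝ => L * l ^ α) 1 :=
      (Real.continuousAt_rpow_const 1 α (Or.inl one_ne_zero)).const_mul L
    simpa [ContinuousAt] using this
  have hinv : Tendsto (fun t0 : ℝ => 1 / t0) atTop (nhds 0) := by
    simpa using tendsto_inv_atTop_zero (𝕜 := ℝ)
  rw [tendsto_order]
  constructor
  · intro a ha
    have h1 : Tendsto (fun t0 : ℝ => (1 + 1 / t0)⁻¹) atTop (nhds 1) := by
      simpa using (hinv.const_add 1).inv₀ (by norm_num)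
    obtain ⟨t0, h2, h3⟩ :=
      (((hcont.comp h1).eventually_const_lt ha).and (eventually_gt_atTop 0)).exists
    obtain ⟨B, hB⟩ := hlower (1 / t0) (by positivity)
    have h4 : Tendsto (fun t => (Z ((1 + 1 / t0)⁻¹ * t) / G (Real.exp t)) - B / G (Real.exp t))
        atTop (nhds (L * ((1 + 1 / t0)⁻¹) ^ α - 0)) :=
      (hscale _ (by positivity)).sub (hGt.const_div_atTop B)
    rw [sub_zero] at h4
    filter_upwards [h4.eventually_const_lt h2, hB, hGpos] with t h5 h6 h7
    refine h5.trans_le ?_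
    rw [← sub_div]
    apply div_le_div_of_nonneg_right _ h7.le
    linarith
  · intro a ha
    have h1 : Tendsto (fun t0 : ℝ => (1 - 1 / t0)⁻¹) atTop (nhds 1) := by
      simpa using (hinv.const_sub 1).inv₀ (by norm_num)
    obtain ⟨t0, ⟨h2, h3⟩, hs⟩ :=
      ((((hcont.comp h1).eventually_lt_const ha).and (eventually_gt_atTop 1)).and hsum).exists
    obtain ⟨K, hK, hKe⟩ := hupper t0 h3 hs
    have hd : 0 < 1 - 1 / t0 := by
      rw [sub_pos, div_lt_one (by linarith)]; exact h3
    have h5 : Tendsto (fun t : ℝ => K ^ (1 / t)) atTop (nhds 1) := by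
      have := (Real.continuousAt_const_rpow (a := K) (b := 0) hK.ne').tendsto.comp hinv
      simpa [Function.comp_def] using this
    have h4 := h5.mul (hscale _ (inv_pos.2 hd))
    rw [one_mul] at h4
    filter_upwards [h4.eventually_lt_const h2, hKe, hGpos] with t h5 h6 h7
    refine lt_of_le_of_lt ?_ h5
    rw [← mul_div_assoc]
    exact div_le_div_of_nonneg_right h6.2 h7.le

/-- Lemma `limit lemma` in the paper: if `G ∈ Ω` satisfies
`G(t^λ)/G(t) → λ^α` and a positive `T ∈ M_G` has Cesàro-type limit `c > 0` of its singular
value sums, then its zeta-function has the asymptotic `c·Γ(α+1)·G(e^t)`. -/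
theorem statement8
    {H : Type*} [NormedAddCommGroup H] [InnerProductSpace ℂ H] [CompleteSpace H]
    (e : HilbertBasis ℕ ℂ H)
    (G : ℝ → ℝ) (hG : MemOmega G) (α : ℝ) (hα : 0 ≤ α)
    (hrv : ∀ l : ℝ, 0 < l → Tendsto (fun t : ℝ => G (t ^ l) / G t) atTop (nhds (l ^ α)))
    (T : H →L[ℂ] H) (hTcpt : IsCompactOperator ⇑T) (hTpos : T.IsPositive)
    (hTM : MemMG G T) (c : ℝ) (hc : 0 < c)
    (hlim : Tendsto (fun n : ℕ => (∑ k ∈ Finset.range (n + 1), sv T k) / G ((n : ℝ) + 1))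
      atTop (nhds c)) :
    Tendsto (fun t : ℝ => (∑' n : ℕ, sv T n ^ (1 + 1 / t)) / G (Real.exp t))
      atTop (nhds (c * Real.Gamma (α + 1))) := by
  exact aux_seq G hG α hα hrv (sv T) (aux_sv_nonneg T) (aux_sv_anti T) c hTM hlim
end
end

section
/- Let (x_n)_{n≥0} be a sequence of complex numbers with |x_n| = O(n^{α−1}) for some α ≥ 0. If lim_{r→1−} (1−r)^α ∑_{n=0}^∞ x_n r^n = c, then lim_{n→∞} n^{−α} ∑_{j=0}^n x_j = c / Γ(α+1). -/
open MeasureTheory Filter Topology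
open scoped ENNReal
noncomputable section

lemma mc_prod (a : ℝ) (n : ℕ) :
    (n.factorial : ℝ) * Ring.multichoose a n = ∏ i ∈ Finset.range n, (a + i) := by
  rw [← nsmul_eq_mul, Ring.factorial_nsmul_multichoose_eq_ascPochhammer,
    Polynomial.ascPochhammer_smeval_eq_eval]
  induction n with
  | zero => simp
  | succ n ih => rw [ascPochhammer_succ_eval, ih, Finset.prod_range_succ]

lemma mc_sum (a : ℝ) (n : ℕ) :
    ∑ j ∈ Finset.range (n + 1), Ring.multichoose a j = Ring.multichoose (a + 1) n := by
  induction n with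
  | zero => simp
  | succ n ih => rw [Finset.sum_range_succ, ih, Ring.multichoose_succ_succ, add_comm]

lemma mc_rel (a : ℝ) (n : ℕ) :
    (a + n) * Ring.multichoose a n = a * Ring.multichoose (a + 1) n := by
  have h0 : (n.factorial : ℝ) ≠ 0 := by exact_mod_cast n.factorial_ne_zero
  apply mul_left_cancel₀ h0
  have h1 := Finset.prod_range_succ (fun i : ℕ => a + i) n
  rw [Finset.prod_range_succ'] at h1
  have h2 : ∏ k ∈ Finset.range n, (a + ((k + 1 : ℕ) : ℝ)) = ∏ k ∈ Finset.range n, (a + 1 + (k : ℝ)) :=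
    Finset.prod_congr rfl (fun i _ => by push_cast; ring)
  rw [h2, ← mc_prod, ← mc_prod] at h1
  push_cast at h1
  linear_combination -h1

lemma mc_asymp (a : ℝ) (ha : 0 ≤ a) :
    Tendsto (fun n : ℕ => (n : ℝ) ^ (-a) * Ring.multichoose (a + 1) n) atTop
      (𝓝 (1 / Real.Gamma (a + 1))) := by
  have h1 := Real.GammaSeq_tendsto_Gamma (a + 1)
  have hG : Real.Gamma (a + 1) ≠ 0 := (Real.Gamma_pos_of_pos (by linarith)).ne'
  have h2 : Tendsto (fun n : ℕ => (n : ℝ) / (n + (a + 1))) atTop (𝓝 1) :=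
    tendsto_natCast_div_add_atTop (a + 1)
  refine (h2.div h1 hG).congr' ?_
  filter_upwards [eventually_gt_atTop 0] with n hn
  have hn' : (0 : ℝ) < n := by exact_mod_cast hn
  have h0 : (n.factorial : ℝ) ≠ 0 := by exact_mod_cast n.factorial_ne_zero
  have hp : (0 : ℝ) < ∏ i ∈ Finset.range n, (a + 1 + i) :=
    Finset.prod_pos (fun i _ => by positivity)
  have hm : Ring.multichoose (a + 1) n = (∏ i ∈ Finset.range n, (a + 1 + (i : ℝ))) / n.factorial := by
    rw [← mc_prod]; field_simp
  have hpw : (0:ℝ) < (n : ℝ) ^ a := by positivity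
  have hq : (0:ℝ) < a + 1 + n := by positivity
  simp only [Pi.div_apply, Real.GammaSeq]
  rw [hm, Finset.prod_range_succ, Real.rpow_add hn', Real.rpow_one, Real.rpow_neg hn'.le]
  have : (n:ℝ) + (a+1) ≠ 0 := by positivity
  field_simp
  ring

lemma mc_bigO (a : ℝ) (ha : 0 ≤ a) :
    (fun n : ℕ => Ring.multichoose a n) =O[atTop] fun n : ℕ => (n : ℝ) ^ (a - 1) := by
  have h1 := (mc_asymp a ha).isBigO_one ℝ
  have h2 : (fun n : ℕ => (n : ℝ) ^ (a - 1) * (a * (n / (a + n)))) =O[atTop]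
      fun n : ℕ => (n : ℝ) ^ (a - 1) := by
    apply Asymptotics.IsBigO.of_bound a
    filter_upwards [eventually_gt_atTop 0] with n hn
    have hn' : (0 : ℝ) < n := by exact_mod_cast hn
    rw [norm_mul, mul_comm]
    gcongr
    rw [Real.norm_of_nonneg (by positivity)]
    apply mul_le_of_le_one_right ha
    rw [div_le_one (by positivity)]; linarith
  refine ((h2.mul h1).congr' ?_ ?_)
  · filter_upwards [eventually_gt_atTop 0] with n hn
    have hn' : (0 : ℝ) < n := by exact_mod_cast hn
    have hr := mc_rel a n
    have hpw : (0:ℝ) < (n : ℝ) ^ a := by positivity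
    rw [Real.rpow_sub_one hn'.ne', Real.rpow_neg hn'.le]
    field_simp
    linear_combination -hr
  · filter_upwards with n; simp

lemma mc_hasSum (a r : ℝ) (h0 : 0 < r) (h1 : r < 1) :
    HasSum (fun n : ℕ => Ring.multichoose a n * r ^ n) (1 / (1 - r) ^ a) := by
  have h := (Real.one_div_one_sub_rpow_hasFPowerSeriesOnBall_zero a).hasSum (y := r)
    (by simp [enorm_eq_nnnorm, ← NNReal.coe_lt_coe, abs_of_pos h0, h1])
  simpa [← Ring.multichoose_eq, mul_comm] using h

def hfun (y : ℝ) : ℝ := if y < Real.exp (-1) then -1 / (1 - y) else (1 + y) / y ^ 2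

lemma approx_poly (ε : ℝ) (hε : 0 < ε) : ∃ q₁ q₂ : Polynomial ℝ,
    (∀ y ∈ Set.Icc (0:ℝ) 1, q₁.eval y ≤ hfun y ∧ hfun y ≤ q₂.eval y) ∧
    ∫ y in (0:ℝ)..1, (q₂ - q₁).eval y < ε := by
  set a := Real.exp (-1) with ha
  have ha0 : 0 < a := Real.exp_pos _
  have ha1 : a < 1 := by rw [ha, Real.exp_lt_one_iff]; norm_num
  let u : ℝ → ℝ := fun y => -1 / (1 - min y a)
  let v : ℝ → ℝ := fun y => (1 + max y a) / (max y a) ^ 2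
  have hu : Continuous u := by
    refine Continuous.div (by fun_prop) (by fun_prop) (fun y => ?_)
    have := min_le_right y a; linarith
  have hv : Continuous v := by
    refine Continuous.div (by fun_prop) (by fun_prop) (fun y => ?_)
    have := le_max_right y a; positivity
  have hd0 : ∀ y, 0 ≤ v y - u y := by
    intro y
    have h1 := min_le_right y a
    have h2 := le_max_right y a
    have h3 : u y ≤ 0 := div_nonpos_of_nonpos_of_nonneg (by norm_num) (by linarith)
    have h4 : 0 ≤ v y := by have : 0 < max y a := by linarith
                            positivity
    linarith
  obtain ⟨K, hK⟩ : ∃ K, ∀ y ∈ Set.Icc (0:ℝ) 1, v y - u y ≤ K := by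
    obtain ⟨K, hK⟩ := (isCompact_Icc (a := (0:ℝ)) (b := 1)).bddAbove_image (hv.sub hu).continuousOn
    exact ⟨K, fun y hy => hK ⟨y, hy, rfl⟩⟩
  have hK0 : 0 ≤ K := (hd0 0).trans (hK 0 (by simp))
  let δ := ε / (8 * (K + 1))
  have hδ : 0 < δ := by positivity
  let φ : ℝ → ℝ := fun z => max 0 (min 1 (z / δ))
  have hφ : Continuous φ := by fun_prop
  have hφ0 : ∀ z, 0 ≤ φ z := fun z => le_max_left _ _
  have hφ1 : ∀ z, φ z ≤ 1 := fun z => max_le (by norm_num) (min_le_left _ _)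
  have hφneg : ∀ z, z ≤ 0 → φ z = 0 := fun z hz => by
    apply max_eq_left
    exact (min_le_right _ _).trans (div_nonpos_of_nonpos_of_nonneg hz hδ.le)
  have hφbig : ∀ z, δ ≤ z → φ z = 1 := fun z hz => by
    have : 1 ≤ z / δ := by rwa [one_le_div hδ]
    simp only [φ, min_eq_left this]; simp
  let H1 : ℝ → ℝ := fun y => u y + φ (y - a) * (v y - u y)
  let H2 : ℝ → ℝ := fun y => u y + φ (y - a + δ) * (v y - u y)
  have hH1 : Continuous H1 := by fun_prop
  have hH2 : Continuous H2 := by fun_prop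
  have hh : ∀ y ∈ Set.Icc (0:ℝ) 1, H1 y ≤ hfun y ∧ hfun y ≤ H2 y := by
    intro y hy
    by_cases hya : y < a
    · have : hfun y = u y := by simp [hfun, u, ← ha, hya, min_eq_left hya.le]
      simp only [H1, H2]
      rw [this, hφneg (y - a) (by linarith)]
      have := mul_nonneg (hφ0 (y - a + δ)) (hd0 y)
      constructor <;> linarith
    · have : hfun y = v y := by
        simp [hfun, v, ← ha, hya, max_eq_left (not_lt.1 hya)]
      simp only [H1, H2]
      rw [this, hφbig (y - a + δ) (by linarith)]
      have := mul_le_mul_of_nonneg_right (hφ1 (y - a)) (hd0 y)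
      constructor <;> linarith
  have hη : 0 < ε / 16 := by positivity
  obtain ⟨p1, hp1⟩ := exists_polynomial_near_of_continuousOn 0 1 H1 hH1.continuousOn _ hη
  obtain ⟨p2, hp2⟩ := exists_polynomial_near_of_continuousOn 0 1 H2 hH2.continuousOn _ hη
  refine ⟨p1 - Polynomial.C (ε / 16), p2 + Polynomial.C (ε / 16), ?_, ?_⟩
  · intro y hy
    have h1 := abs_lt.1 (hp1 y hy)
    have h2 := abs_lt.1 (hp2 y hy)
    have h3 := hh y hy
    simp only [Polynomial.eval_sub, Polynomial.eval_add, Polynomial.eval_C]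
    constructor <;> linarith
  · have hle : ∀ y ∈ Set.Icc (0:ℝ) 1,
        (p2 + Polynomial.C (ε / 16) - (p1 - Polynomial.C (ε / 16))).eval y ≤
          (Set.Icc (a - δ) (a + δ)).indicator (fun _ => K) y + ε / 4 := by
      intro y hy
      have h1 := abs_lt.1 (hp1 y hy)
      have h2 := abs_lt.1 (hp2 y hy)
      simp only [Polynomial.eval_sub, Polynomial.eval_add, Polynomial.eval_C]
      have key : H2 y - H1 y ≤ (Set.Icc (a - δ) (a + δ)).indicator (fun _ => K) y := by
        have e : H2 y - H1 y = (φ (y - a + δ) - φ (y - a)) * (v y - u y) := by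
          simp only [H1, H2]; ring
        rw [e]
        by_cases hm : y ∈ Set.Icc (a - δ) (a + δ)
        · rw [Set.indicator_of_mem hm]
          have : φ (y - a + δ) - φ (y - a) ≤ 1 := by linarith [hφ1 (y - a + δ), hφ0 (y - a)]
          calc _ ≤ 1 * (v y - u y) := mul_le_mul_of_nonneg_right this (hd0 y)
            _ ≤ K := by rw [one_mul]; exact hK y hy
        · rw [Set.indicator_of_notMem hm]
          rw [Set.mem_Icc, not_and_or, not_le, not_le] at hm
          rcases hm with hm | hm
          · rw [hφneg (y - a + δ) (by linarith), hφneg (y - a) (by linarith)]; simp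
          · rw [hφbig (y - a + δ) (by linarith), hφbig (y - a) (by linarith)]; simp
      linarith
    have hint : IntervalIntegrable ((Set.Icc (a - δ) (a + δ)).indicator (fun _ => K)) volume 0 1 := by
      apply Integrable.intervalIntegrable
      rw [integrable_indicator_iff measurableSet_Icc]
      exact integrableOn_const (by simp)
    have hind : ∫ y in (0:ℝ)..1, (Set.Icc (a - δ) (a + δ)).indicator (fun _ => K) y ≤ 2 * δ * K := by
      rw [intervalIntegral.integral_of_le zero_le_one]
      calc _ ≤ ∫ y, (Set.Icc (a - δ) (a + δ)).indicator (fun _ => K) y := by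
            apply setIntegral_le_integral
            · rw [integrable_indicator_iff measurableSet_Icc]
              exact integrableOn_const (by simp)
            · filter_upwards with y
              exact Set.indicator_nonneg (fun _ _ => hK0) y
        _ = 2 * δ * K := by
            rw [integral_indicator measurableSet_Icc]
            simp
            left
            rw [max_eq_left] <;> linarith
    calc _ ≤ ∫ y in (0:ℝ)..1, ((Set.Icc (a - δ) (a + δ)).indicator (fun _ => K) y + ε / 4) := by
          apply intervalIntegral.integral_mono_on zero_le_one
          · exact (Polynomial.continuous _).intervalIntegrable _ _
          · exact hint.add intervalIntegrable_const
          · exact hle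
      _ = (∫ y in (0:ℝ)..1, (Set.Icc (a - δ) (a + δ)).indicator (fun _ => K) y) + ε / 4 := by
          rw [intervalIntegral.integral_add hint intervalIntegrable_const]; simp
      _ ≤ 2 * δ * K + ε / 4 := by linarith
      _ < ε := by
          have : 8 * δ * (K + 1) = ε := by simp only [δ]; field_simp
          nlinarith

lemma summ_geom (x : ℕ → ℂ) (α C : ℝ) (hα : 0 ≤ α) (hC0 : 0 ≤ C)
    (hC : ∀ n : ℕ, 1 ≤ n → ‖x n‖ ≤ C * (n : ℝ) ^ (α - 1)) (r : ℝ) (h0 : 0 < r) (h1 : r < 1) :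
    Summable (fun n : ℕ => x n * (r : ℂ) ^ n) := by
  have hs := (summable_pow_mul_geometric_of_norm_lt_one (R := ℝ) ⌈α⌉₊ (r := r)
    (by rwa [Real.norm_of_nonneg h0.le])).mul_left C
  refine Summable.of_norm_bounded_eventually_nat hs ?_
  filter_upwards [eventually_ge_atTop 1] with n hn
  have hn' : (1 : ℝ) ≤ n := by exact_mod_cast hn
  have : (n : ℝ) ^ (α - 1) ≤ (n : ℝ) ^ ⌈α⌉₊ := by
    rw [← Real.rpow_natCast]
    apply Real.rpow_le_rpow_of_exponent_le hn'
    linarith [Nat.le_ceil α]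
  rw [norm_mul, norm_pow, Complex.norm_real, Real.norm_of_nonneg h0.le, ← mul_assoc]
  gcongr
  exact (hC n hn).trans (by gcongr)

lemma poly_term (x : ℕ → ℂ) (α : ℝ)
    (hs : ∀ r : ℝ, 0 < r → r < 1 → Summable (fun n : ℕ => x n * (r : ℂ) ^ n))
    (hf : Tendsto (fun t : ℝ => ((t ^ α : ℝ) : ℂ) * ∑' n : ℕ, x n * (Real.exp (-t) : ℂ) ^ n)
      (𝓝[>] 0) (𝓝 0)) (R : Polynomial ℝ) :
    (∀ t : ℝ, 0 < t → Summable (fun n : ℕ =>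
      x n * ((Real.exp (-t) ^ n * R.eval (Real.exp (-t) ^ n) : ℝ) : ℂ))) ∧
    Tendsto (fun t : ℝ => ((t ^ α : ℝ) : ℂ) * ∑' n : ℕ,
      x n * ((Real.exp (-t) ^ n * R.eval (Real.exp (-t) ^ n) : ℝ) : ℂ)) (𝓝[>] 0) (𝓝 0) := by
  induction R using Polynomial.induction_on' with
  | add p q hp hq =>
    have e : ∀ (t : ℝ) (n : ℕ),
        x n * ((Real.exp (-t) ^ n * (p + q).eval (Real.exp (-t) ^ n) : ℝ) : ℂ) =
        x n * ((Real.exp (-t) ^ n * p.eval (Real.exp (-t) ^ n) : ℝ) : ℂ) +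
        x n * ((Real.exp (-t) ^ n * q.eval (Real.exp (-t) ^ n) : ℝ) : ℂ) := by
      intro t n; rw [Polynomial.eval_add]; push_cast; ring
    simp only [e]
    refine ⟨fun t ht => (hp.1 t ht).add (hq.1 t ht), ?_⟩
    have := hp.2.add hq.2
    rw [add_zero] at this
    refine this.congr' ?_
    filter_upwards [self_mem_nhdsWithin] with t ht
    rw [(hp.1 t ht).tsum_add (hq.1 t ht), mul_add]
  | monomial k a =>
    have e : ∀ (t : ℝ) (n : ℕ),
        x n * ((Real.exp (-t) ^ n * (Polynomial.monomial k a).eval (Real.exp (-t) ^ n) : ℝ) : ℂ) =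
        (a : ℂ) * (x n * (Real.exp (-(((k : ℝ) + 1) * t)) : ℂ) ^ n) := by
      intro t n
      have : Real.exp (-(((k : ℝ) + 1) * t)) = Real.exp (-t) ^ (k + 1) := by
        rw [← Real.exp_nat_mul]; congr 1; push_cast; ring
      rw [this, Polynomial.eval_monomial]; push_cast; ring
    simp only [e]
    have hk : (0:ℝ) < (k : ℝ) + 1 := by positivity
    refine ⟨fun t ht => (hs _ (Real.exp_pos _) ?_).mul_left _, ?_⟩
    · rw [Real.exp_lt_one_iff]; have := mul_pos hk ht; linarith
    have hm : Tendsto (fun t : ℝ => ((k : ℝ) + 1) * t) (𝓝[>] 0) (𝓝[>] 0) := by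
      apply tendsto_nhdsWithin_iff.2
      refine ⟨?_, ?_⟩
      · have : Tendsto (fun t : ℝ => ((k : ℝ) + 1) * t) (𝓝 0) (𝓝 (((k : ℝ) + 1) * 0)) :=
          Continuous.tendsto (by fun_prop) 0
        rw [mul_zero] at this
        exact this.mono_left nhdsWithin_le_nhds
      · filter_upwards [self_mem_nhdsWithin] with t ht using mul_pos hk ht
    have h := (hf.comp hm).const_mul ((a : ℂ) * (((((k : ℝ) + 1) ^ α)⁻¹ : ℝ) : ℂ))
    rw [mul_zero] at h
    refine h.congr' ?_
    filter_upwards [self_mem_nhdsWithin] with t ht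
    have ht' : (0:ℝ) < t := ht
    simp only [Function.comp]
    rw [Real.mul_rpow hk.le ht'.le, tsum_mul_left]
    have : ((((k : ℝ) + 1) ^ α : ℝ) : ℂ) ≠ 0 := by
      exact_mod_cast (Real.rpow_pos_of_pos hk α).ne'
    push_cast at this ⊢
    field_simp

lemma one_sub_exp_div : Tendsto (fun t : ℝ => t / (1 - Real.exp (-t))) (𝓝[>] 0) (𝓝 1) := by
  have h : HasDerivAt (fun t : ℝ => -Real.exp (-t)) 1 0 := by
    exact ((hasDerivAt_neg (0:ℝ)).exp).neg.congr_deriv (by simp)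
  have h2 := h.tendsto_slope_zero_right
  have h3 := h2.inv₀ one_ne_zero
  rw [inv_one] at h3
  refine h3.congr (fun t => ?_)
  simp only [zero_add, neg_zero, Real.exp_zero, smul_eq_mul, mul_inv, inv_inv]
  rw [div_eq_mul_inv]; congr 2; ring

lemma poly_geom (R : Polynomial ℝ) :
    (∀ t : ℝ, 0 < t → Summable (fun n : ℕ =>
      (Real.exp (-t) ^ n * R.eval (Real.exp (-t) ^ n) : ℝ))) ∧
    Tendsto (fun t : ℝ => t * ∑' n : ℕ,
      (Real.exp (-t) ^ n * R.eval (Real.exp (-t) ^ n) : ℝ)) (𝓝[>] 0)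
      (𝓝 (∫ y in (0:ℝ)..1, R.eval y)) := by
  induction R using Polynomial.induction_on' with
  | add p q hp hq =>
    simp only [Polynomial.eval_add, mul_add]
    refine ⟨fun t ht => (hp.1 t ht).add (hq.1 t ht), ?_⟩
    have := hp.2.add hq.2
    rw [intervalIntegral.integral_add (p.continuous.intervalIntegrable _ _)
      (q.continuous.intervalIntegrable _ _)]
    refine this.congr' ?_
    filter_upwards [self_mem_nhdsWithin] with t ht
    rw [(hp.1 t ht).tsum_add (hq.1 t ht), mul_add]
  | monomial k a =>
    have e : ∀ (t : ℝ) (n : ℕ),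
        (Real.exp (-t) ^ n * (Polynomial.monomial k a).eval (Real.exp (-t) ^ n) : ℝ) =
        a * (Real.exp (-(((k : ℝ) + 1) * t))) ^ n := by
      intro t n
      have : Real.exp (-(((k : ℝ) + 1) * t)) = Real.exp (-t) ^ (k + 1) := by
        rw [← Real.exp_nat_mul]; congr 1; push_cast; ring
      rw [this, Polynomial.eval_monomial]; ring
    simp only [e]
    have hk : (0:ℝ) < (k : ℝ) + 1 := by positivity
    have hlt : ∀ t : ℝ, 0 < t → Real.exp (-(((k : ℝ) + 1) * t)) < 1 := fun t ht => by
      rw [Real.exp_lt_one_iff]; have := mul_pos hk ht; linarith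
    refine ⟨fun t ht => (summable_geometric_of_lt_one (Real.exp_pos _).le (hlt t ht)).mul_left _, ?_⟩
    have hm : Tendsto (fun t : ℝ => ((k : ℝ) + 1) * t) (𝓝[>] 0) (𝓝[>] 0) := by
      apply tendsto_nhdsWithin_iff.2
      refine ⟨?_, ?_⟩
      · have : Tendsto (fun t : ℝ => ((k : ℝ) + 1) * t) (𝓝 0) (𝓝 (((k : ℝ) + 1) * 0)) :=
          Continuous.tendsto (by fun_prop) 0
        rw [mul_zero] at this
        exact this.mono_left nhdsWithin_le_nhds
      · filter_upwards [self_mem_nhdsWithin] with t ht using mul_pos hk ht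
    have h := (one_sub_exp_div.comp hm).const_mul (a / ((k : ℝ) + 1))
    have ei : ∫ y in (0:ℝ)..1, (Polynomial.monomial k a).eval y = a / ((k : ℝ) + 1) * 1 := by
      simp only [Polynomial.eval_monomial]
      rw [intervalIntegral.integral_const_mul, integral_pow]; simp; ring
    rw [ei]
    refine h.congr' ?_
    filter_upwards [self_mem_nhdsWithin] with t ht
    have ht' : (0:ℝ) < t := ht
    simp only [Function.comp]
    rw [tsum_mul_left, tsum_geometric_of_lt_one (Real.exp_pos _).le (hlt t ht)]
    have := hlt t ht
    have : 1 - Real.exp (-(((k : ℝ) + 1) * t)) ≠ 0 := by linarith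
    field_simp

lemma rpow_le_exp (α s : ℝ) (hα : 0 ≤ α) (hs : 0 ≤ s) : s ^ α ≤ (α + 1) ^ α * Real.exp s := by
  have h1 : s ≤ (α + 1) * Real.exp (s / (α + 1)) := by
    have := Real.add_one_le_exp (s / (α + 1))
    have h2 : s = (α + 1) * (s / (α + 1)) := by field_simp
    nlinarith
  calc s ^ α ≤ ((α + 1) * Real.exp (s / (α + 1))) ^ α := by gcongr
    _ = (α + 1) ^ α * Real.exp (s / (α + 1) * α) := by
        rw [Real.mul_rpow (by positivity) (by positivity), ← Real.exp_mul]
    _ ≤ _ := by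
        gcongr
        rw [div_mul_eq_mul_div, div_le_iff₀ (by positivity)]
        nlinarith

lemma hfun_eq (y : ℝ) (h0 : 0 < y) :
    y ^ 2 + y ^ 2 * (1 - y) * hfun y = if y < Real.exp (-1) then 0 else 1 := by
  unfold hfun
  split_ifs with h
  · have : Real.exp (-1) < 1 := by rw [Real.exp_lt_one_iff]; norm_num
    have : 1 - y ≠ 0 := by linarith
    field_simp; ring
  · field_simp; ring

lemma tauber_zero (x : ℕ → ℂ) (α C : ℝ) (hα : 0 ≤ α) (hC0 : 0 ≤ C)
    (hC : ∀ n : ℕ, 1 ≤ n → ‖x n‖ ≤ C * (n : ℝ) ^ (α - 1))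
    (hf : Tendsto (fun t : ℝ => ((t ^ α : ℝ) : ℂ) * ∑' n : ℕ, x n * (Real.exp (-t) : ℂ) ^ n)
      (𝓝[>] 0) (𝓝 0)) :
    Tendsto (fun n : ℕ => ((((n : ℝ) ^ (-α) : ℝ)) : ℂ) * ∑ j ∈ Finset.range (n + 1), x j)
      atTop (𝓝 0) := by
  have hs := summ_geom x α C hα hC0 hC
  set D := C * (α + 1) ^ α + 1 with hD
  have hD0 : 0 < D := by positivity
  rw [Metric.tendsto_nhds]
  intro ε hε
  obtain ⟨q₁, q₂, hq, hint⟩ := approx_poly (ε / (2 * D)) (by positivity)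
  set R : Polynomial ℝ := Polynomial.X + Polynomial.X * (1 - Polynomial.X) * q₁ with hR
  set Q := q₂ - q₁ with hQ
  obtain ⟨hP1, hP2⟩ := poly_term x α hs hf R
  obtain ⟨hG1, hG2⟩ := poly_geom Q
  -- pointwise bound
  have key : ∀ t : ℝ, 0 < t → ∀ n : ℕ,
      t ^ α * ‖x n * (((if Real.exp (-t) ^ n < Real.exp (-1) then 0 else 1 : ℝ) : ℂ)
        - ((Real.exp (-t) ^ n * R.eval (Real.exp (-t) ^ n) : ℝ) : ℂ))‖ ≤
      D * (t * (Real.exp (-t) ^ n * Q.eval (Real.exp (-t) ^ n))) := by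
    intro t ht n
    set y := Real.exp (-t) ^ n with hy
    have hy0 : 0 < y := by positivity
    have hy1 : y ≤ 1 := pow_le_one₀ (Real.exp_pos _).le (by rw [Real.exp_le_one_iff]; linarith)
    have hyq := hq y ⟨hy0.le, hy1⟩
    have hQy : Q.eval y = q₂.eval y - q₁.eval y := by rw [hQ, Polynomial.eval_sub]
    have e : (if y < Real.exp (-1) then 0 else 1 : ℝ) - y * R.eval y
        = y ^ 2 * (1 - y) * (hfun y - q₁.eval y) := by
      rw [← hfun_eq y hy0, hR]; simp; ring
    rw [← Complex.ofReal_sub, e, norm_mul, Complex.norm_real, Real.norm_of_nonneg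
      (mul_nonneg (mul_nonneg (by positivity) (by linarith)) (by linarith))]
    rcases Nat.eq_zero_or_pos n with rfl | hn
    · have hy' : y = 1 := by simp [hy]
      rw [hy'] at hyq hQy ⊢
      simp only [sub_self, mul_zero, zero_mul]
      have : 0 ≤ Q.eval 1 := by linarith
      positivity
    · have hn' : (0:ℝ) < n := by exact_mod_cast hn
      have hye : y = Real.exp (-(n * t)) := by rw [hy, ← Real.exp_nat_mul]; congr 1; ring
      have h1y : 1 - y ≤ n * t := by
        have := Real.add_one_le_exp (-(n * t)); rw [← hye] at this; linarith
      have hM : (n * t) ^ α * y ≤ (α + 1) ^ α := by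
        have := rpow_le_exp α (n * t) hα (by positivity)
        calc _ ≤ (α + 1) ^ α * Real.exp (n * t) * y := by gcongr
          _ = (α + 1) ^ α := by rw [hye, mul_assoc, ← Real.exp_add]; simp
      have hQ0 : 0 ≤ Q.eval y := by linarith
      have hw : hfun y - q₁.eval y ≤ Q.eval y := by linarith
      have hw0 : 0 ≤ hfun y - q₁.eval y := by linarith
      have h1y0 : 0 ≤ 1 - y := by linarith
      calc t ^ α * (‖x n‖ * (y ^ 2 * (1 - y) * (hfun y - q₁.eval y)))
          ≤ t ^ α * ((C * (n:ℝ) ^ (α - 1)) * (y ^ 2 * (n * t) * Q.eval y)) := by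
            gcongr
            exact hC n hn
        _ = C * ((n * t) ^ α * y) * (t * (y * Q.eval y)) := by
            rw [Real.rpow_sub_one hn'.ne', Real.mul_rpow hn'.le ht.le]
            field_simp
        _ ≤ C * (α + 1) ^ α * (t * (y * Q.eval y)) := by gcongr
        _ ≤ D * (t * (y * Q.eval y)) := by
            gcongr
            rw [hD]; linarith
  have ht : Tendsto (fun N : ℕ => ((N : ℝ))⁻¹) atTop (𝓝[>] 0) :=
    tendsto_inv_atTop_nhdsGT_zero.comp tendsto_natCast_atTop_atTop
  have hlim : Tendsto (fun t : ℝ => ‖((t ^ α : ℝ) : ℂ) * ∑' n : ℕ,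
      x n * ((Real.exp (-t) ^ n * R.eval (Real.exp (-t) ^ n) : ℝ) : ℂ)‖ +
      D * (t * ∑' n : ℕ, (Real.exp (-t) ^ n * Q.eval (Real.exp (-t) ^ n) : ℝ))) (𝓝[>] 0)
      (𝓝 (‖(0:ℂ)‖ + D * ∫ y in (0:ℝ)..1, Q.eval y)) := hP2.norm.add (hG2.const_mul D)
  have hlt : ‖(0:ℂ)‖ + D * ∫ y in (0:ℝ)..1, Q.eval y < ε := by
    rw [norm_zero, zero_add]
    calc D * ∫ y in (0:ℝ)..1, Q.eval y < D * (ε / (2 * D)) := by gcongr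
      _ = ε / 2 := by field_simp
      _ < ε := by linarith
  have hev := (hlim.comp ht).eventually (gt_mem_nhds hlt)
  filter_upwards [hev, eventually_gt_atTop 0] with N hN hN0
  refine lt_of_le_of_lt ?_ hN
  have hN' : (0:ℝ) < N := by exact_mod_cast hN0
  simp only [Function.comp]
  set t : ℝ := (N : ℝ)⁻¹ with htdef
  have ht0 : 0 < t := by positivity
  rw [dist_zero_right, Real.rpow_neg hN'.le, ← Real.inv_rpow hN'.le]
  have hcond : ∀ n : ℕ, (Real.exp (-t) ^ n < Real.exp (-1)) ↔ N < n := by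
    intro n
    rw [← Real.exp_nat_mul, Real.exp_lt_exp, htdef]
    rw [mul_neg, neg_lt_neg_iff, ← div_eq_mul_inv, one_lt_div hN', Nat.cast_lt]
  have hsum : HasSum (fun n : ℕ => x n * (((if Real.exp (-t) ^ n < Real.exp (-1) then 0 else 1 : ℝ)) : ℂ))
      (∑ j ∈ Finset.range (N + 1), x j) := by
    have : ∑ j ∈ Finset.range (N + 1), x j = ∑ j ∈ Finset.range (N + 1),
        x j * (((if Real.exp (-t) ^ j < Real.exp (-1) then 0 else 1 : ℝ)) : ℂ) := by
      apply Finset.sum_congr rfl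
      intro j hj
      rw [if_neg]; · simp
      rw [hcond]; rw [Finset.mem_range] at hj; omega
    rw [this]
    apply hasSum_sum_of_ne_finset_zero
    intro j hj
    rw [if_pos]; · simp
    rw [hcond]; rw [Finset.mem_range] at hj; omega
  have hdiff := hsum.sub (hP1 t ht0).hasSum
  simp only [← mul_sub] at hdiff
  have hbd : ‖((t ^ α : ℝ) : ℂ) * (∑ j ∈ Finset.range (N + 1), x j - ∑' n : ℕ,
      x n * ((Real.exp (-t) ^ n * R.eval (Real.exp (-t) ^ n) : ℝ) : ℂ))‖ ≤
      D * (t * ∑' n : ℕ, (Real.exp (-t) ^ n * Q.eval (Real.exp (-t) ^ n) : ℝ)) := by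
    have h2 := hdiff.mul_left ((t ^ α : ℝ) : ℂ)
    have h3 := ((hG1 t ht0).hasSum.mul_left t).mul_left D
    refine h2.norm_le_of_bounded h3 (fun n => ?_)
    rw [norm_mul, Complex.norm_real, Real.norm_of_nonneg (by positivity)]
    exact key t ht0 n
  calc _ = ‖((t ^ α : ℝ) : ℂ) * (∑' n : ℕ,
      x n * ((Real.exp (-t) ^ n * R.eval (Real.exp (-t) ^ n) : ℝ) : ℂ)) +
      ((t ^ α : ℝ) : ℂ) * (∑ j ∈ Finset.range (N + 1), x j - ∑' n : ℕ,
      x n * ((Real.exp (-t) ^ n * R.eval (Real.exp (-t) ^ n) : ℝ) : ℂ))‖ := by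
        congr 1; ring
    _ ≤ _ := (norm_add_le _ _).trans (by gcongr)

lemma bigO_bound (x : ℕ → ℂ) (α : ℝ)
    (hO : (fun n => x n) =O[atTop] fun n : ℕ => (n : ℝ) ^ (α - 1)) :
    ∃ C : ℝ, 0 ≤ C ∧ ∀ n : ℕ, 1 ≤ n → ‖x n‖ ≤ C * (n : ℝ) ^ (α - 1) := by
  obtain ⟨c, hc⟩ := hO.bound
  obtain ⟨N, hN⟩ := eventually_atTop.1 hc
  set S := ∑ n ∈ Finset.range N, ‖x n‖ / (n : ℝ) ^ (α - 1) with hS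
  have hS0 : 0 ≤ S := Finset.sum_nonneg (fun n _ => by positivity)
  refine ⟨|c| + S, by positivity, fun n hn => ?_⟩
  have hn' : (0:ℝ) < n := by exact_mod_cast hn
  have hp : 0 < (n:ℝ) ^ (α - 1) := by positivity
  rcases le_or_gt N n with h | h
  · have := hN n h
    rw [Real.norm_of_nonneg hp.le] at this
    refine this.trans ?_
    gcongr
    linarith [le_abs_self c]
  · have h1 : ‖x n‖ / (n : ℝ) ^ (α - 1) ≤ S :=
      Finset.single_le_sum (f := fun n : ℕ => ‖x n‖ / (n : ℝ) ^ (α - 1))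
        (fun i _ => by positivity) (Finset.mem_range.2 h)
    rw [div_le_iff₀ hp] at h1
    refine h1.trans ?_
    gcongr
    linarith [abs_nonneg c]

/-- Lemma `tauber` in the paper: a Tauberian theorem for complex-valued
sequences. -/
theorem statement16
    (x : ℕ → ℂ) (α : ℝ) (hα : 0 ≤ α)
    (hO : (fun n => x n) =O[atTop] fun n : ℕ => (n : ℝ) ^ (α - 1))
    (c : ℂ)
    (habel : Tendsto (fun r : ℝ =>
        ((((1 - r) ^ α : ℝ)) : ℂ) * ∑' n : ℕ, x n * (r : ℂ) ^ n)
      (nhdsWithin 1 (Set.Ioo (0:ℝ) 1)) (nhds c)) :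
    Tendsto (fun n : ℕ => ((((n : ℝ) ^ (-α) : ℝ)) : ℂ) * ∑ j ∈ Finset.range (n + 1), x j)
      atTop (nhds (c / ((Real.Gamma (α + 1) : ℝ) : ℂ))) := by
  let w : ℕ → ℂ := fun n => x n - c * (Ring.multichoose α n : ℝ)
  obtain ⟨Cx, hCx0, hCx⟩ := bigO_bound x α hO
  have hsx := summ_geom x α Cx hα hCx0 hCx
  have hwO : (fun n => w n) =O[atTop] fun n : ℕ => (n : ℝ) ^ (α - 1) := by
    refine hO.sub (Asymptotics.IsBigO.const_mul_left ?_ c)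
    have := mc_bigO α hα
    rw [← Asymptotics.isBigO_norm_left] at this ⊢
    simpa only [Complex.norm_real] using this
  obtain ⟨C, hC0, hC⟩ := bigO_bound w α hwO
  have hm : Tendsto (fun t : ℝ => Real.exp (-t)) (𝓝[>] 0) (𝓝[Set.Ioo (0:ℝ) 1] 1) := by
    apply tendsto_nhdsWithin_iff.2
    refine ⟨?_, ?_⟩
    · have : Tendsto (fun t : ℝ => Real.exp (-t)) (𝓝 0) (𝓝 (Real.exp (-0))) :=
        Continuous.tendsto (by fun_prop) 0
      rw [neg_zero, Real.exp_zero] at this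
      exact this.mono_left nhdsWithin_le_nhds
    · filter_upwards [self_mem_nhdsWithin] with t ht
      refine ⟨Real.exp_pos _, ?_⟩
      rw [Real.exp_lt_one_iff]
      have : (0:ℝ) < t := ht
      linarith
  have hw : Tendsto (fun r : ℝ => ((((1 - r) ^ α : ℝ)) : ℂ) * ∑' n : ℕ, w n * (r : ℂ) ^ n)
      (𝓝[Set.Ioo (0:ℝ) 1] 1) (𝓝 0) := by
    have h := habel.sub_const c
    rw [sub_self] at h
    refine h.congr' ?_
    filter_upwards [self_mem_nhdsWithin] with r hr
    have h1 := (Complex.hasSum_ofReal.2 (mc_hasSum α r hr.1 hr.2)).mul_left c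
    have h2 := (hsx r hr.1 hr.2).hasSum.sub h1
    have h3 : HasSum (fun n => w n * (r:ℂ) ^ n)
      ((∑' n : ℕ, x n * (r : ℂ) ^ n) - c * ((1 / (1 - r) ^ α : ℝ) : ℂ)) := by
      have e : (fun n => w n * (r:ℂ) ^ n) = fun n : ℕ =>
          x n * (r : ℂ) ^ n - c * ((Ring.multichoose α n * r ^ n : ℝ) : ℂ) := by
        funext n
        simp only [w]; push_cast; ring
      rw [e]
      exact h2
    rw [h3.tsum_eq]
    have hp : (((1 - r) ^ α : ℝ) : ℂ) ≠ 0 := by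
      exact_mod_cast (Real.rpow_pos_of_pos (by linarith [hr.2]) α).ne'
    rw [Complex.ofReal_div, Complex.ofReal_one]
    field_simp
  have hf : Tendsto (fun t : ℝ => ((t ^ α : ℝ) : ℂ) * ∑' n : ℕ, w n * (Real.exp (-t) : ℂ) ^ n)
      (𝓝[>] 0) (𝓝 0) := by
    have h1 := one_sub_exp_div.rpow_const (p := α) (Or.inl one_ne_zero)
    have h2 := (Complex.continuous_ofReal.tendsto _).comp h1
    have h3 := h2.mul (hw.comp hm)
    rw [mul_zero] at h3
    refine h3.congr' ?_
    filter_upwards [self_mem_nhdsWithin] with t ht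
    have ht' : (0:ℝ) < t := ht
    have : Real.exp (-t) < 1 := by rw [Real.exp_lt_one_iff]; linarith
    have h4 : 0 < 1 - Real.exp (-t) := by linarith
    simp only [Function.comp]
    rw [← mul_assoc, ← Complex.ofReal_mul, Real.div_rpow ht'.le h4.le,
      div_mul_cancel₀ _ (Real.rpow_pos_of_pos h4 α).ne']
  have hz := tauber_zero w α C hα hC0 hC hf
  have hy := ((Complex.continuous_ofReal.tendsto _).comp (mc_asymp α hα)).const_mul c
  have := hz.add hy
  rw [zero_add, Complex.ofReal_div, Complex.ofReal_one, mul_one_div] at this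
  refine this.congr (fun n => ?_)
  simp only [Function.comp, w]
  rw [Finset.sum_sub_distrib, ← Finset.mul_sum, ← mc_sum]
  push_cast
  ring
end
end
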